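/- Let g be a Riemannian metric on the cylinder T¹ × [−1,1] = S¹ × [−1,1] with Sc(g) ≥ 2 everywhere. Then the distance between the two boundary circles satisfies dist_g(S¹×{−1}, S¹×{1}) < π. -/

import Mathlib

/-- First partial derivative of a function of two real variables. -/
noncomputable def pdx (f : ℝ × ℝ → ℝ) (p : ℝ × ℝ) : ℝ := fderiv ℝ f p (1, 0)

/-- Second partial derivative of a function of two real variables. -/
noncomputable def pdy (f : ℝ × ℝ → ℝ) (p : ℝ × ℝ) : ℝ := fderiv ℝ f p (0, 1)

/-- The Gauss curvature of the Riemannian metric `E dx² + 2F dxdy + G dy²`, given by the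
Brioschi formula (which is intrinsic, valid for any abstract metric in coordinates). -/
noncomputable def gaussCurvature (E F G : ℝ × ℝ → ℝ) (p : ℝ × ℝ) : ℝ :=
  (Matrix.det
      !![-(1/2) * pdy (pdy E) p + pdx (pdy F) p - (1/2) * pdx (pdx G) p,
           (1/2) * pdx E p, pdx F p - (1/2) * pdy E p;
         pdy F p - (1/2) * pdx G p, E p, F p;
         (1/2) * pdy G p, F p, G p]
    - Matrix.det
      !![0, (1/2) * pdy E p, (1/2) * pdx G p;
         (1/2) * pdy E p, E p, F p;
         (1/2) * pdx G p, F p, G p]) / (E p * G p - F p ^ 2) ^ 2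

/-- The length of a `C¹` path `γ` (over the parameter interval `[0,1]`) in the Riemannian
metric `E dx² + 2F dxdy + G dy²`. -/
noncomputable def pathLength (E F G : ℝ × ℝ → ℝ) (γ : ℝ → ℝ × ℝ) : ℝ :=
  ∫ t in (0:ℝ)..1,
    Real.sqrt (E (γ t) * (deriv γ t).1 ^ 2 + 2 * F (γ t) * (deriv γ t).1 * (deriv γ t).2 +
      G (γ t) * (deriv γ t).2 ^ 2)

/-!
A crossing of the strip of least energy exists, because the metric is periodic, hence uniformly
elliptic on the strip, and the energy is weakly lower semicontinuous on `H¹` paths.  The du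
Bois-Reymond lemma makes it a `C¹` geodesic of constant speed that meets both boundary lines
orthogonally, as its end points are free to slide along them.  A unit normal field `N` along it is
then parallel and tangent to the boundary at both ends, so `ψ N` is an admissible variation for
every function `ψ`, with no condition on `ψ` at the ends.  The second variation along `ψ N` is the
index form `2 ∫ (ψ'² - K L² ψ²)`, where `L` is the length, plus a boundary term quadratic in the end
values of `ψ`.  It is nonnegative; if `K L² ≥ π²`, then `ψ(t) = sin (π t) + δ` with a small `δ > 0`
makes it negative.  Hence `K ≥ κ` forces `L < π / √κ`, strictly.
-/

open MeasureTheory Set Filter Topology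

namespace BandWidth

section WeakCompactness

theorem exists_subseq_tendsto_inner {H : Type*} [NormedAddCommGroup H] [InnerProductSpace ℝ H]
    [CompleteSpace H] [TopologicalSpace.SeparableSpace H] {u : ℕ → H} {C : ℝ}
    (hu : ∀ n, ‖u n‖ ≤ C) :
    ∃ a : H, ∃ φ : ℕ → ℕ, StrictMono φ ∧
      ∀ b, Tendsto (fun n ↦ inner ℝ (u (φ n)) b) atTop (𝓝 (inner ℝ a b)) := by
  let dual (x : H) : WeakDual ℝ H := StrongDual.toWeakDual (InnerProductSpace.toDual ℝ H x)
  have hball : ∀ n, dual (u n) ∈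
      WeakDual.toStrongDual ⁻¹' Metric.closedBall (0 : StrongDual ℝ H) C := fun n ↦ by
    rw [mem_preimage, mem_closedBall_zero_iff]
    exact ((InnerProductSpace.toDual ℝ H).norm_map (u n)).trans_le (hu n)
  obtain ⟨L, -, φ, hφ, hL⟩ := WeakDual.isSeqCompact_closedBall ℝ H 0 C hball
  refine ⟨(InnerProductSpace.toDual ℝ H).symm (WeakDual.toStrongDual L), φ, hφ, fun b ↦ ?_⟩
  rw [InnerProductSpace.toDual_symm_apply]
  exact ((WeakDual.eval_continuous b).tendsto L).comp hL

variable {α : Type*} [MeasurableSpace α] {μ : Measure α}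

theorem inner_toLp {f g : α → ℝ} (hf : MemLp f 2 μ) (hg : MemLp g 2 μ) :
    inner ℝ (hf.toLp f) (hg.toLp g) = ∫ x, f x * g x ∂μ := by
  rw [L2.inner_def]
  refine integral_congr_ae ?_
  filter_upwards [hf.coeFn_toLp, hg.coeFn_toLp] with x hfx hgx
  simp [hfx, hgx, mul_comm]

theorem sq_integral_mul_le {f g : α → ℝ} (hf : MemLp f 2 μ) (hg : MemLp g 2 μ) :
    (∫ x, f x * g x ∂μ) ^ 2 ≤ (∫ x, f x ^ 2 ∂μ) * ∫ x, g x ^ 2 ∂μ := by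
  have h := real_inner_mul_inner_self_le (hf.toLp f) (hg.toLp g)
  simpa only [inner_toLp, ← pow_two] using h

theorem exists_subseq_tendsto_integral_mul [IsSeparable μ] {f : ℕ → α → ℝ}
    (hf : ∀ n, MemLp (f n) 2 μ) {C : ℝ} (hC : ∀ n, ∫ x, f n x ^ 2 ∂μ ≤ C) :
    ∃ g, MemLp g 2 μ ∧ ∃ φ : ℕ → ℕ, StrictMono φ ∧ ∀ h, MemLp h 2 μ →
      Tendsto (fun n ↦ ∫ x, f (φ n) x * h x ∂μ) atTop (𝓝 (∫ x, g x * h x ∂μ)) := by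
  have : Fact ((2 : ENNReal) ≠ ⊤) := ⟨by norm_num⟩
  have hnorm : ∀ n, ‖(hf n).toLp (f n)‖ ≤ √C := fun n ↦ by
    refine Real.le_sqrt_of_sq_le ?_
    rw [← real_inner_self_eq_norm_sq, inner_toLp]
    simpa only [pow_two] using hC n
  obtain ⟨g, φ, hφ, hg⟩ := exists_subseq_tendsto_inner hnorm
  refine ⟨g, Lp.memLp g, φ, hφ, fun h hh ↦ ?_⟩
  simpa only [inner_toLp, ← inner_toLp (Lp.memLp g) hh, Lp.toLp_coeFn] using hg (hh.toLp h)

theorem dual_apply_eq (A : ℝ × ℝ →L[ℝ] ℝ) (v : ℝ × ℝ) :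
    A v = v.1 * A (1, 0) + v.2 * A (0, 1) := by
  rw [← smul_eq_mul, ← smul_eq_mul, ← map_smul, ← map_smul, ← map_add]
  simp

theorem exists_subseq_tendsto_integral_apply [IsSeparable μ] {v : ℕ → α → ℝ × ℝ}
    (hv : ∀ n, MemLp (v n) 2 μ) {C : ℝ} (hC : ∀ n, ∫ x, ‖v n x‖ ^ 2 ∂μ ≤ C) :
    ∃ w, MemLp w 2 μ ∧ ∃ φ : ℕ → ℕ, StrictMono φ ∧
      ∀ A : α → ℝ × ℝ →L[ℝ] ℝ, MemLp A 2 μ →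
        Tendsto (fun n ↦ ∫ x, A x (v (φ n) x) ∂μ) atTop (𝓝 (∫ x, A x (w x) ∂μ)) := by
  have hsq : ∀ {f : α → ℝ} (n), MemLp f 2 μ → (∀ x, |f x| ≤ ‖v n x‖) → ∫ x, f x ^ 2 ∂μ ≤ C :=
    fun n hf hle ↦ (integral_mono hf.integrable_sq (hv n).norm.integrable_sq
      fun x ↦ sq_le_sq.2 ((hle x).trans (le_abs_self _))).trans (hC n)
  obtain ⟨w₁, hw₁, φ, hφ, hlim₁⟩ := exists_subseq_tendsto_integral_mul (fun n ↦ (hv n).fst)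
    fun n ↦ hsq n (hv n).fst fun x ↦ norm_fst_le (v n x)
  obtain ⟨w₂, hw₂, χ, hχ, hlim₂⟩ := exists_subseq_tendsto_integral_mul (fun n ↦ (hv (φ n)).snd)
    fun n ↦ hsq (φ n) (hv (φ n)).snd fun x ↦ norm_snd_le (v (φ n) x)
  refine ⟨fun x ↦ (w₁ x, w₂ x), .of_fst_snd ⟨hw₁, hw₂⟩, φ ∘ χ, hφ.comp hχ, fun A hA ↦ ?_⟩
  have hAe : ∀ e, MemLp (fun x ↦ A x e) 2 μ := fun e ↦
    ((ContinuousLinearMap.apply ℝ ℝ e).comp_memLp' hA)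
  have h₁ := (hlim₁ _ (hAe (1, 0))).comp hχ.tendsto_atTop
  have h₂ := hlim₂ _ (hAe (0, 1))
  have hsplit : ∀ {u : α → ℝ × ℝ}, MemLp u 2 μ → ∫ x, A x (u x) ∂μ =
      ∫ x, (u x).1 * A x (1, 0) ∂μ + ∫ x, (u x).2 * A x (0, 1) ∂μ := fun {u} hu ↦ by
    refine (integral_congr_ae (.of_forall fun x ↦ dual_apply_eq (A x) (u x))).trans ?_
    exact integral_add (hu.fst.integrable_mul (hAe _)) (hu.snd.integrable_mul (hAe _))
  rw [hsplit (.of_fst_snd ⟨hw₁, hw₂⟩)]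
  exact (h₁.add h₂).congr fun n ↦ (hsplit (hv _)).symm

variable {V : Type*} [NormedAddCommGroup V] [NormedSpace ℝ V]

theorem integrable_apply {A : α → V →L[ℝ] ℝ} {v : α → V} (hA : MemLp A 2 μ) (hv : MemLp v 2 μ) :
    Integrable (fun x ↦ A x (v x)) μ :=
  memLp_one_iff_integrable.1 ((ContinuousLinearMap.id ℝ (V →L[ℝ] ℝ)).memLp_of_bilin 1 hA hv)

theorem tendsto_integral_apply_of_tendsto_of_tendsto {A : ℕ → α → V →L[ℝ] ℝ}
    {B : α → V →L[ℝ] ℝ} {v : ℕ → α → V} {w : α → V} {C : ℝ} (hA : ∀ n, MemLp (A n) 2 μ)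
    (hB : MemLp B 2 μ) (hv : ∀ n, MemLp (v n) 2 μ) (hC : ∀ n, ∫ x, ‖v n x‖ ^ 2 ∂μ ≤ C)
    (hAB : Tendsto (fun n ↦ ∫ x, ‖A n x - B x‖ ^ 2 ∂μ) atTop (𝓝 0))
    (hweak : Tendsto (fun n ↦ ∫ x, B x (v n x) ∂μ) atTop (𝓝 (∫ x, B x (w x) ∂μ))) :
    Tendsto (fun n ↦ ∫ x, A n x (v n x) ∂μ) atTop (𝓝 (∫ x, B x (w x) ∂μ)) := by
  have hsub : ∀ n, MemLp (fun x ↦ A n x - B x) 2 μ := fun n ↦ (hA n).sub hB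
  have hrem : Tendsto (fun n ↦ ∫ x, (A n x - B x) (v n x) ∂μ) atTop (𝓝 0) := by
    have hsqrt : Tendsto (fun n ↦ √((∫ x, ‖A n x - B x‖ ^ 2 ∂μ) * C)) atTop (𝓝 0) := by
      simpa using (hAB.mul_const C).sqrt
    refine squeeze_zero_norm (fun n ↦ ?_) hsqrt
    calc ‖∫ x, (A n x - B x) (v n x) ∂μ‖
        ≤ ∫ x, ‖A n x - B x‖ * ‖v n x‖ ∂μ :=
          norm_integral_le_of_norm_le ((hsub n).norm.integrable_mul (hv n).norm)
            (.of_forall fun x ↦ (A n x - B x).le_opNorm (v n x))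
      _ ≤ √((∫ x, ‖A n x - B x‖ ^ 2 ∂μ) * C) := by
          refine Real.le_sqrt_of_sq_le ((sq_integral_mul_le (hsub n).norm (hv n).norm).trans ?_)
          exact mul_le_mul_of_nonneg_left (hC n) (integral_nonneg fun x ↦ by positivity)
  convert hrem.add hweak using 1
  · ext n
    rw [← integral_add (integrable_apply (hsub n) (hv n)) (integrable_apply hB (hv n))]
    simp
  · rw [zero_add]

end WeakCompactness

section SobolevPaths

/-- Lebesgue measure on the parameter interval of a path. -/
noncomputable abbrev unitVolume : Measure ℝ := volume.restrict (Ioc 0 1)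

theorem ae_unitVolume_of_forall {P : ℝ → Prop} (h : ∀ t ∈ Icc (0 : ℝ) 1, P t) :
    ∀ᵐ t ∂unitVolume, P t := by
  filter_upwards [ae_restrict_mem measurableSet_Ioc] with t ht using h t (Ioc_subset_Icc_self ht)

variable {V W : Type*} [NormedAddCommGroup V] [NormedAddCommGroup W]

theorem memLp_of_continuousOn {f : ℝ → V} (hf : ContinuousOn f (Icc 0 1)) (p : ENNReal) :
    MemLp f p unitVolume := by
  obtain ⟨C, hC⟩ := isCompact_Icc.exists_bound_of_continuousOn hf
  exact .of_bound ((hf.mono Ioc_subset_Icc_self).aestronglyMeasurable measurableSet_Ioc) C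
    (ae_unitVolume_of_forall hC)

theorem integrable_of_continuousOn {f : ℝ → V} (hf : ContinuousOn f (Icc 0 1)) :
    Integrable f unitVolume :=
  memLp_one_iff_integrable.1 (memLp_of_continuousOn hf 1)

theorem integrable_unitVolume_iff {f : ℝ → V} :
    Integrable f unitVolume ↔ IntervalIntegrable f volume 0 1 :=
  (intervalIntegrable_iff_integrableOn_Ioc_of_le zero_le_one).symm

theorem integrable_comp_affine {f : ℝ → V} (hf : Integrable f unitVolume) {a b : ℝ}
    (ha : a ∈ Icc (0 : ℝ) 1) (hb : b ∈ Icc (0 : ℝ) 1) (hab : a < b) :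
    Integrable (fun s ↦ f (a + (b - a) * s)) unitVolume := by
  have hsub : IntervalIntegrable f volume a b :=
    (integrable_unitVolume_iff.1 hf).mono_set
      (by rw [uIcc_of_le zero_le_one]; exact uIcc_subset_Icc ha hb)
  have hcomp := (hsub.comp_add_left a).comp_mul_left (c := b - a)
  rw [sub_self, zero_div, div_self (sub_pos.2 hab).ne'] at hcomp
  exact integrable_unitVolume_iff.2 hcomp

variable [NormedSpace ℝ V] [NormedSpace ℝ W]

theorem memLp_clm_apply {A : ℝ → V →L[ℝ] W} {v : ℝ → V} (hA : ContinuousOn A (Icc 0 1))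
    (hv : MemLp v 2 unitVolume) : MemLp (fun t ↦ A t (v t)) 2 unitVolume :=
  (ContinuousLinearMap.id ℝ (V →L[ℝ] W)).memLp_of_bilin 2 (memLp_of_continuousOn hA ⊤) hv

theorem intervalIntegral_zero_one (f : ℝ → V) :
    ∫ t in (0 : ℝ)..1, f t = ∫ t, f t ∂unitVolume :=
  intervalIntegral.integral_of_le zero_le_one

theorem continuousOn_integral {q : ℝ → V} (hq : Integrable q unitVolume) :
    ContinuousOn (fun t ↦ ∫ s in (0 : ℝ)..t, q s) (Icc 0 1) := by
  have h := intervalIntegral.continuousOn_primitive_interval'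
    (integrable_unitVolume_iff.1 hq) left_mem_uIcc
  rwa [uIcc_of_le zero_le_one] at h

/-- The path `γ : [0, 1] → V` belongs to the Sobolev space `H¹`, with weak derivative `v ∈ L²`. -/
structure IsSobolevPath (γ v : ℝ → V) : Prop where
  memLp : MemLp v 2 unitVolume
  eq_add_integral : ∀ t ∈ Icc (0 : ℝ) 1, γ t = γ 0 + ∫ s in (0 : ℝ)..t, v s

namespace IsSobolevPath

variable {γ v η ζ : ℝ → V}

theorem intervalIntegrable (h : IsSobolevPath γ v) {s t : ℝ} (hs : s ∈ Icc (0 : ℝ) 1)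
    (ht : t ∈ Icc (0 : ℝ) 1) : IntervalIntegrable v volume s t :=
  (integrable_unitVolume_iff.1 (h.memLp.integrable one_le_two)).mono_set
    (by rw [uIcc_of_le zero_le_one]; exact uIcc_subset_Icc hs ht)

theorem continuousOn (h : IsSobolevPath γ v) : ContinuousOn γ (Icc 0 1) :=
  (continuousOn_const.add (continuousOn_integral (h.memLp.integrable one_le_two))).congr
    h.eq_add_integral

theorem add_integral_eq (h : IsSobolevPath γ v) {s t : ℝ} (hs : s ∈ Icc (0 : ℝ) 1)
    (ht : t ∈ Icc (0 : ℝ) 1) : γ s + ∫ r in s..t, v r = γ t := by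
  have h0 : (0 : ℝ) ∈ Icc (0 : ℝ) 1 := left_mem_Icc.2 zero_le_one
  rw [h.eq_add_integral s hs, h.eq_add_integral t ht, add_assoc,
    intervalIntegral.integral_add_adjacent_intervals (h.intervalIntegrable h0 hs)
      (h.intervalIntegrable hs ht)]

theorem add_smul (h : IsSobolevPath γ v) (h' : IsSobolevPath η ζ) (ε : ℝ) :
    IsSobolevPath (fun t ↦ γ t + ε • η t) (fun t ↦ v t + ε • ζ t) := by
  refine ⟨h.memLp.add (h'.memLp.const_smul ε), fun t ht ↦ ?_⟩
  have h0 : (0 : ℝ) ∈ Icc (0 : ℝ) 1 := left_mem_Icc.2 zero_le_one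
  have hζ : IntervalIntegrable (fun s ↦ ε • ζ s) volume 0 t :=
    (h'.intervalIntegrable h0 ht).smul ε
  rw [intervalIntegral.integral_add (h.intervalIntegrable h0 ht) hζ,
    intervalIntegral.integral_smul, h.eq_add_integral t ht, h'.eq_add_integral t ht,
    _root_.smul_add]
  abel

theorem congr_velocity (h : IsSobolevPath γ v) (hvζ : v =ᵐ[unitVolume] ζ) :
    IsSobolevPath γ ζ := by
  refine ⟨h.memLp.ae_eq hvζ, fun t ht ↦ ?_⟩
  rw [h.eq_add_integral t ht, intervalIntegral.integral_of_le ht.1,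
    intervalIntegral.integral_of_le ht.1]
  congr 1
  exact integral_congr_ae (ae_mono (Measure.restrict_mono (Ioc_subset_Ioc_right ht.2) le_rfl) hvζ)

theorem of_hasDerivAt [CompleteSpace V] (hγ : ContinuousOn γ (Icc 0 1))
    (hv : ContinuousOn v (Icc 0 1)) (hderiv : ∀ t ∈ Ioo (0 : ℝ) 1, HasDerivAt γ (v t) t) :
    IsSobolevPath γ v := by
  refine ⟨memLp_of_continuousOn hv 2, fun t ht ↦ ?_⟩
  have hsub : Icc 0 t ⊆ Icc (0 : ℝ) 1 := Icc_subset_Icc_right ht.2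
  rw [intervalIntegral.integral_eq_sub_of_hasDerivAt_of_le ht.1 (hγ.mono hsub)
    (fun s hs ↦ hderiv s ⟨hs.1, hs.2.trans_le ht.2⟩)
    ((hv.mono hsub).intervalIntegrable_of_Icc ht.1), add_sub_cancel]

theorem comp_affine (h : IsSobolevPath γ v) {a b : ℝ} (ha : a ∈ Icc (0 : ℝ) 1)
    (hb : b ∈ Icc (0 : ℝ) 1) (hab : a < b) :
    IsSobolevPath (fun s ↦ γ (a + (b - a) * s)) (fun s ↦ (b - a) • v (a + (b - a) * s)) := by
  have hv := integrable_comp_affine (h.memLp.integrable one_le_two) ha hb hab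
  have hsq := integrable_comp_affine
    ((memLp_two_iff_integrable_sq_norm h.memLp.aestronglyMeasurable).1 h.memLp) ha hb hab
  refine ⟨((memLp_two_iff_integrable_sq_norm hv.aestronglyMeasurable).2 hsq).const_smul _,
    fun s hs ↦ ?_⟩
  have hcomb : a + (b - a) * s ∈ Icc (0 : ℝ) 1 :=
    ⟨by nlinarith [ha.1, hs.1], by nlinarith [hb.2, hs.2]⟩
  rw [intervalIntegral.integral_smul, intervalIntegral.smul_integral_comp_add_mul, mul_zero,
    add_zero, h.add_integral_eq ha hcomb]

end IsSobolevPath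

theorem integral_indicator_apply [CompleteSpace V] [CompleteSpace W] (A : V →L[ℝ] W)
    {v : ℝ → V} {t : ℝ} (ht : t ∈ Icc (0 : ℝ) 1) (hv : IntervalIntegrable v volume 0 t) :
    ∫ s, (Ioc 0 t).indicator (fun _ ↦ A) s (v s) ∂unitVolume = A (∫ s in (0 : ℝ)..t, v s) := by
  have hind : ∀ s, (Ioc 0 t).indicator (fun _ ↦ A) s (v s) =
      (Ioc 0 t).indicator (fun s ↦ A (v s)) s := fun s ↦ by
    by_cases hs : s ∈ Ioc 0 t <;> simp [hs]
  simp only [hind]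
  rw [integral_indicator measurableSet_Ioc, Measure.restrict_restrict measurableSet_Ioc,
    inter_eq_left.2 (Ioc_subset_Ioc_right ht.2), ← intervalIntegral.integral_of_le ht.1,
    A.intervalIntegral_comp_comm hv]

theorem exists_subseq_tendsto_isSobolevPath {γ v : ℕ → ℝ → ℝ × ℝ} {K : Set (ℝ × ℝ)}
    (hK : IsCompact K) (h : ∀ n, IsSobolevPath (γ n) (v n)) (h0 : ∀ n, γ n 0 ∈ K) {C : ℝ}
    (hC : ∀ n, ∫ t, ‖v n t‖ ^ 2 ∂unitVolume ≤ C) :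
    ∃ γ' w, IsSobolevPath γ' w ∧ ∃ φ : ℕ → ℕ, StrictMono φ ∧
      (∀ t ∈ Icc (0 : ℝ) 1, Tendsto (fun n ↦ γ (φ n) t) atTop (𝓝 (γ' t))) ∧
      ∀ A : ℝ → ℝ × ℝ →L[ℝ] ℝ, MemLp A 2 unitVolume →
        Tendsto (fun n ↦ ∫ t, A t (v (φ n) t) ∂unitVolume) atTop
          (𝓝 (∫ t, A t (w t) ∂unitVolume)) := by
  obtain ⟨p, -, φ, hφ, hp⟩ := hK.tendsto_subseq h0
  obtain ⟨w, hw, χ, hχ, hweak⟩ := exists_subseq_tendsto_integral_apply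
    (fun n ↦ (h (φ n)).memLp) fun n ↦ hC (φ n)
  have hpath : IsSobolevPath (fun t ↦ p + ∫ s in (0 : ℝ)..t, w s) w := ⟨hw, fun t _ ↦ by simp⟩
  refine ⟨_, w, hpath, φ ∘ χ, hφ.comp hχ, fun t ht ↦ ?_, hweak⟩
  have h0 : (0 : ℝ) ∈ Icc (0 : ℝ) 1 := left_mem_Icc.2 zero_le_one
  have hcomp : ∀ A : ℝ × ℝ →L[ℝ] ℝ, Tendsto (fun n ↦ A (∫ s in (0 : ℝ)..t, v (φ (χ n)) s)) atTop
      (𝓝 (A (∫ s in (0 : ℝ)..t, w s))) := fun A ↦ by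
    have hA : MemLp ((Ioc 0 t).indicator fun _ ↦ A) 2 unitVolume :=
      (memLp_const A).indicator measurableSet_Ioc
    rw [← integral_indicator_apply A ht (hpath.intervalIntegrable h0 ht)]
    exact (hweak _ hA).congr fun n ↦
      integral_indicator_apply A ht ((h _).intervalIntegrable h0 ht)
  have hint : Tendsto (fun n ↦ ∫ s in (0 : ℝ)..t, v (φ (χ n)) s) atTop
      (𝓝 (∫ s in (0 : ℝ)..t, w s)) :=
    (hcomp (.fst ℝ ℝ ℝ)).prodMk_nhds (hcomp (.snd ℝ ℝ ℝ))
  exact ((hp.comp hχ.tendsto_atTop).add hint).congr fun n ↦ ((h _).eq_add_integral t ht).symm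

end SobolevPaths

section Minimizers

/-- The energy `∫ g(v, v)` of a path `γ` with velocity `v` in a field `g` of bilinear forms. -/
noncomputable def energy {V : Type*} [NormedAddCommGroup V] [NormedSpace ℝ V]
    (g : V → V →L[ℝ] V →L[ℝ] ℝ) (γ v : ℝ → V) : ℝ :=
  ∫ t, g (γ t) (v t) (v t) ∂unitVolume

/-- The closed strip `ℝ × [-1, 1]`, the universal cover of the band. -/
def strip : Set (ℝ × ℝ) := {p | p.2 ∈ Icc (-1) 1}

/-- A `C²` field of bilinear forms on the plane which restricts to a Riemannian metric on the
strip and descends to the band. -/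
structure IsBandMetric (g : ℝ × ℝ → ℝ × ℝ →L[ℝ] ℝ × ℝ →L[ℝ] ℝ) : Prop where
  contDiff : ContDiff ℝ 2 g
  symm : ∀ p v w, g p v w = g p w v
  periodic : Function.Periodic g (1, 0)
  pos : ∀ p ∈ strip, ∀ v ≠ 0, 0 < g p v v

/-- An `H¹` path in the strip from the lower to the upper boundary line, with velocity `v`. -/
structure IsCrossing (γ v : ℝ → ℝ × ℝ) : Prop extends IsSobolevPath γ v where
  snd_zero : (γ 0).2 = -1
  snd_one : (γ 1).2 = 1
  mem_strip : ∀ t ∈ Icc (0 : ℝ) 1, γ t ∈ strip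

/-- An energy-minimising crossing of the strip. -/
structure IsMinimizer (g : ℝ × ℝ → ℝ × ℝ →L[ℝ] ℝ × ℝ →L[ℝ] ℝ) (γ v : ℝ → ℝ × ℝ) : Prop
    extends IsCrossing γ v where
  energy_le : ∀ η ζ, IsCrossing η ζ → energy g γ v ≤ energy g η ζ

theorem isCrossing_vertical : IsCrossing (fun t ↦ (0, 2 * t - 1)) fun _ ↦ (0, 2) where
  toIsSobolevPath := .of_hasDerivAt (by fun_prop) (by fun_prop) fun t _ ↦
    (hasDerivAt_const t 0).prodMk (by simpa using ((hasDerivAt_id t).const_mul 2).sub_const 1)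
  snd_zero := by norm_num
  snd_one := by norm_num
  mem_strip t ht := ⟨by linarith [ht.1], by linarith [ht.2]⟩

theorem IsCrossing.sub_const {γ v : ℝ → ℝ × ℝ} (h : IsCrossing γ v) (a : ℝ) :
    IsCrossing (fun t ↦ γ t - (a, 0)) v where
  memLp := h.memLp
  eq_add_integral t ht := by rw [h.eq_add_integral t ht, sub_add_eq_add_sub]
  snd_zero := by simp [h.snd_zero]
  snd_one := by simp [h.snd_one]
  mem_strip t ht := by simpa [strip] using h.mem_strip t ht

theorem integrable_bilin {V W : Type*} [NormedAddCommGroup V] [NormedSpace ℝ V]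
    [NormedAddCommGroup W] [NormedSpace ℝ W] {B : ℝ → V →L[ℝ] W →L[ℝ] ℝ} {v : ℝ → V} {w : ℝ → W}
    (hB : ContinuousOn B (Icc 0 1)) (hv : MemLp v 2 unitVolume) (hw : MemLp w 2 unitVolume) :
    Integrable (fun t ↦ B t (v t) (w t)) unitVolume :=
  integrable_apply (memLp_clm_apply hB hv) hw

namespace IsBandMetric

variable {g : ℝ × ℝ → ℝ × ℝ →L[ℝ] ℝ × ℝ →L[ℝ] ℝ} (hg : IsBandMetric g)
include hg

theorem sub_intCast (p : ℝ × ℝ) (n : ℤ) : g (p - ((n : ℝ), 0)) = g p := by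
  simpa using hg.periodic.sub_zsmul_eq n (x := p)

theorem exists_mem_rectangle {p : ℝ × ℝ} (hp : p ∈ strip) :
    ∃ q ∈ Icc (0 : ℝ) 1 ×ˢ Icc (-1 : ℝ) 1, g q = g p :=
  ⟨p - ((⌊p.1⌋ : ℝ), 0), ⟨⟨by simp, by simpa using (Int.fract_lt_one p.1).le⟩,
    by simpa [strip] using hp⟩, hg.sub_intCast p _⟩

theorem exists_norm_le : ∃ M, ∀ p ∈ strip, ‖g p‖ ≤ M := by
  have hK : IsCompact (Icc (0 : ℝ) 1 ×ˢ Icc (-1 : ℝ) 1) := isCompact_Icc.prod isCompact_Icc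
  obtain ⟨M, hM⟩ := hK.exists_bound_of_continuousOn (f := g) hg.contDiff.continuous.continuousOn
  refine ⟨M, fun p hp ↦ ?_⟩
  obtain ⟨q, hq, hqp⟩ := hg.exists_mem_rectangle hp
  exact hqp ▸ hM q hq

theorem nonneg {p : ℝ × ℝ} (hp : p ∈ strip) (v : ℝ × ℝ) : 0 ≤ g p v v := by
  rcases eq_or_ne v 0 with rfl | hv
  · simp
  · exact (hg.pos p hp v hv).le

theorem exists_mul_sq_norm_le : ∃ c > 0, ∀ p ∈ strip, ∀ v, c * ‖v‖ ^ 2 ≤ g p v v := by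
  let S := (Icc (0 : ℝ) 1 ×ˢ Icc (-1 : ℝ) 1) ×ˢ Metric.sphere (0 : ℝ × ℝ) 1
  have hS : IsCompact S := (isCompact_Icc.prod isCompact_Icc).prod (isCompact_sphere 0 1)
  have hcont : Continuous fun x : (ℝ × ℝ) × ℝ × ℝ ↦ g x.1 x.2 x.2 := by
    have := hg.contDiff.continuous
    fun_prop
  obtain ⟨c, hc, hle⟩ := hS.exists_forall_le' hcont.continuousOn (a := 0) fun x hx ↦
    hg.pos x.1 hx.1.2 x.2 (Metric.ne_of_mem_sphere hx.2 one_ne_zero)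
  refine ⟨c, hc, fun p hp v ↦ ?_⟩
  rcases eq_or_ne v 0 with rfl | hv
  · simp
  obtain ⟨q, hq, hqp⟩ := hg.exists_mem_rectangle hp
  have hunit := hle (q, ‖v‖⁻¹ • v) ⟨hq, by simp [norm_smul, hv]⟩
  have hv' := norm_pos_iff.2 hv
  simp only [hqp, map_smul, smul_apply, smul_eq_mul] at hunit
  field_simp at hunit
  exact hunit

theorem continuousOn_comp {γ v : ℝ → ℝ × ℝ} (h : IsSobolevPath γ v) :
    ContinuousOn (fun t ↦ g (γ t)) (Icc 0 1) :=
  hg.contDiff.continuous.comp_continuousOn h.continuousOn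

theorem integrable_energy {γ v : ℝ → ℝ × ℝ} (h : IsSobolevPath γ v) :
    Integrable (fun t ↦ g (γ t) (v t) (v t)) unitVolume :=
  integrable_bilin (hg.continuousOn_comp h) h.memLp h.memLp

theorem exists_mul_integral_sq_norm_le :
    ∃ c > 0, ∀ γ v, IsCrossing γ v → c * ∫ t, ‖v t‖ ^ 2 ∂unitVolume ≤ energy g γ v := by
  obtain ⟨c, hc, hle⟩ := hg.exists_mul_sq_norm_le
  refine ⟨c, hc, fun γ v h ↦ ?_⟩
  rw [energy, ← integral_const_mul]
  exact integral_mono_ae (h.memLp.norm.integrable_sq.const_mul c)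
    (hg.integrable_energy h.toIsSobolevPath)
    (ae_unitVolume_of_forall fun t ht ↦ hle _ (h.mem_strip t ht) (v t))

theorem energy_sub_intCast (γ v : ℝ → ℝ × ℝ) (n : ℤ) :
    energy g (fun t ↦ γ t - ((n : ℝ), 0)) v = energy g γ v := by
  simp only [energy, hg.sub_intCast]

/-- This is what makes the energy weakly lower semicontinuous. -/
theorem two_mul_sub_le {p : ℝ × ℝ} (hp : p ∈ strip) (v w : ℝ × ℝ) :
    2 * g p w v - g p w w ≤ g p v v := by
  have h := hg.nonneg hp (v - w)
  simp only [map_sub, sub_apply, hg.symm p v w] at h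
  linarith

theorem tendsto_integral_sq_norm_apply_sub {γ : ℕ → ℝ → ℝ × ℝ} {γ' w : ℝ → ℝ × ℝ}
    (hγ : ∀ n, ContinuousOn (γ n) (Icc 0 1)) (hγ' : ContinuousOn γ' (Icc 0 1))
    (hmem : ∀ n, ∀ t ∈ Icc (0 : ℝ) 1, γ n t ∈ strip) (hmem' : ∀ t ∈ Icc (0 : ℝ) 1, γ' t ∈ strip)
    (hlim : ∀ t ∈ Icc (0 : ℝ) 1, Tendsto (fun n ↦ γ n t) atTop (𝓝 (γ' t)))
    (hw : MemLp w 2 unitVolume) :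
    Tendsto (fun n ↦ ∫ t, ‖g (γ n t) (w t) - g (γ' t) (w t)‖ ^ 2 ∂unitVolume) atTop (𝓝 0) := by
  obtain ⟨M, hM⟩ := hg.exists_norm_le
  have hcont := hg.contDiff.continuous
  have happ : ∀ {η : ℝ → ℝ × ℝ}, ContinuousOn η (Icc 0 1) →
      MemLp (fun t ↦ g (η t) (w t)) 2 unitVolume := fun hη ↦
    memLp_clm_apply (hcont.comp_continuousOn hη) hw
  rw [← integral_zero ℝ ℝ (μ := unitVolume)]
  refine tendsto_integral_of_dominated_convergence (fun t ↦ (2 * M) ^ 2 * ‖w t‖ ^ 2)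
    (fun n ↦ (((happ (hγ n)).sub (happ hγ')).norm.integrable_sq).aestronglyMeasurable)
    (hw.norm.integrable_sq.const_mul _) (fun n ↦ ae_unitVolume_of_forall fun t ht ↦ ?_)
    (ae_unitVolume_of_forall fun t ht ↦ ?_)
  · rw [Real.norm_of_nonneg (by positivity), ← mul_pow]
    refine pow_le_pow_left₀ (norm_nonneg _)
      (((g (γ n t) - g (γ' t)).le_opNorm (w t)).trans ?_) 2
    gcongr
    linarith [norm_sub_le (g (γ n t)) (g (γ' t)), hM _ (hmem n t ht), hM _ (hmem' t ht)]
  · have hg' : Continuous fun p ↦ ‖g p (w t) - g (γ' t) (w t)‖ ^ 2 := by fun_prop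
    simpa [Function.comp_def] using (hg'.tendsto (γ' t)).comp (hlim t ht)

theorem energy_le_of_tendsto {γ v : ℕ → ℝ → ℝ × ℝ} {γ' w : ℝ → ℝ × ℝ} {C e : ℝ}
    (h : ∀ n, IsCrossing (γ n) (v n)) (h' : IsCrossing γ' w)
    (hC : ∀ n, ∫ t, ‖v n t‖ ^ 2 ∂unitVolume ≤ C)
    (hlim : ∀ t ∈ Icc (0 : ℝ) 1, Tendsto (fun n ↦ γ n t) atTop (𝓝 (γ' t)))
    (hweak : ∀ A : ℝ → ℝ × ℝ →L[ℝ] ℝ, MemLp A 2 unitVolume →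
      Tendsto (fun n ↦ ∫ t, A t (v n t) ∂unitVolume) atTop (𝓝 (∫ t, A t (w t) ∂unitVolume)))
    (he : Tendsto (fun n ↦ energy g (γ n) (v n)) atTop (𝓝 e)) : energy g γ' w ≤ e := by
  have hcont : ∀ n, ContinuousOn (fun t ↦ g (γ n t)) (Icc 0 1) := fun n ↦
    hg.continuousOn_comp (h n).toIsSobolevPath
  have hA : ∀ n, MemLp (fun t ↦ g (γ n t) (w t)) 2 unitVolume := fun n ↦
    memLp_clm_apply (hcont n) h'.memLp
  have hB : MemLp (fun t ↦ g (γ' t) (w t)) 2 unitVolume :=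
    memLp_clm_apply (hg.continuousOn_comp h'.toIsSobolevPath) h'.memLp
  have hAB := hg.tendsto_integral_sq_norm_apply_sub (fun n ↦ (h n).continuousOn) h'.continuousOn
    (fun n ↦ (h n).mem_strip) h'.mem_strip hlim h'.memLp
  have hmixed := tendsto_integral_apply_of_tendsto_of_tendsto hA hB (fun n ↦ (h n).memLp) hC hAB
    (hweak _ hB)
  have hlinear := tendsto_integral_apply_of_tendsto_of_tendsto hA hB (fun _ ↦ h'.memLp)
    (fun _ ↦ le_rfl) hAB tendsto_const_nhds
  have hle : ∀ n, 2 * ∫ t, g (γ n t) (w t) (v n t) ∂unitVolume -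
      ∫ t, g (γ n t) (w t) (w t) ∂unitVolume ≤ energy g (γ n) (v n) := fun n ↦ by
    have hmix := integrable_bilin (hcont n) h'.memLp (h n).memLp
    have hlin := integrable_bilin (hcont n) h'.memLp h'.memLp
    rw [← integral_const_mul, ← integral_sub (hmix.const_mul 2) hlin]
    exact integral_mono_ae ((hmix.const_mul 2).sub hlin)
      (hg.integrable_energy (h n).toIsSobolevPath) (ae_unitVolume_of_forall fun t ht ↦
        hg.two_mul_sub_le ((h n).mem_strip t ht) (v n t) (w t))
  have hlimit := le_of_tendsto_of_tendsto' ((hmixed.const_mul 2).sub hlinear) he hle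
  rw [energy]
  linarith

theorem exists_isMinimizer : ∃ γ v, IsMinimizer g γ v := by
  obtain ⟨c, hc, hcoer⟩ := hg.exists_mul_integral_sq_norm_le
  let S : Set ℝ := {e | ∃ γ v, IsCrossing γ v ∧ (γ 0).1 ∈ Icc (0 : ℝ) 1 ∧ energy g γ v = e}
  have hnormal : ∀ γ v, IsCrossing γ v → energy g γ v ∈ S := fun γ v h ↦
    ⟨_, v, h.sub_const ⌊(γ 0).1⌋, ⟨by simp, by simpa using (Int.fract_lt_one _).le⟩,
      hg.energy_sub_intCast γ v _⟩
  have hbdd : BddBelow S := by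
    refine ⟨0, ?_⟩
    rintro _ ⟨γ, v, h, -, rfl⟩
    exact (mul_nonneg hc.le (integral_nonneg fun t ↦ by positivity)).trans (hcoer γ v h)
  obtain ⟨e, -, he, hS⟩ := exists_seq_tendsto_sInf ⟨_, hnormal _ _ isCrossing_vertical⟩ hbdd
  choose γ v h h0 hγe using hS
  obtain ⟨C, hC⟩ := he.bddAbove_range
  have hvC : ∀ n, ∫ t, ‖v n t‖ ^ 2 ∂unitVolume ≤ C / c := fun n ↦ by
    rw [le_div_iff₀' hc]
    exact (hcoer _ _ (h n)).trans ((hγe n).trans_le (hC (mem_range_self n)))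
  obtain ⟨γ', w, hγ', φ, hφ, hlim, hweak⟩ := exists_subseq_tendsto_isSobolevPath
    (isCompact_Icc.prod isCompact_Icc) (fun n ↦ (h n).toIsSobolevPath)
    (fun n ↦ ⟨h0 n, (h n).mem_strip 0 (left_mem_Icc.2 zero_le_one)⟩) hvC
  have hsnd : ∀ t ∈ Icc (0 : ℝ) 1, Tendsto (fun n ↦ (γ (φ n) t).2) atTop (𝓝 (γ' t).2) :=
    fun t ht ↦ (continuous_snd.tendsto _).comp (hlim t ht)
  have hcross : IsCrossing γ' w :=
    { hγ' with
      snd_zero := tendsto_nhds_unique (hsnd 0 (by simp)) (by simp [(h _).snd_zero])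
      snd_one := tendsto_nhds_unique (hsnd 1 (by simp)) (by simp [(h _).snd_one])
      mem_strip := fun t ht ↦ isClosed_Icc.mem_of_tendsto (hsnd t ht)
        (.of_forall fun n ↦ (h (φ n)).mem_strip t ht) }
  refine ⟨γ', w, hcross, fun η ζ hη ↦ ?_⟩
  refine le_trans ?_ (csInf_le hbdd (hnormal η ζ hη))
  exact hg.energy_le_of_tendsto (fun n ↦ h (φ n)) hcross (fun n ↦ hvC (φ n)) hlim hweak
    (by simpa only [hγe, Function.comp_def] using he.comp hφ.tendsto_atTop)

end IsBandMetric

end Minimizers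

section FirstVariation

variable {g : ℝ × ℝ → ℝ × ℝ →L[ℝ] ℝ × ℝ →L[ℝ] ℝ} {γ v η ζ : ℝ → ℝ × ℝ}

theorem IsCrossing.four_le_integral_sq_norm (h : IsCrossing γ v) :
    4 ≤ ∫ t, ‖v t‖ ^ 2 ∂unitVolume := by
  have hint : ∫ t, (v t).2 ∂unitVolume = 2 := by
    have hadd := congrArg Prod.snd (h.eq_add_integral 1 (right_mem_Icc.2 zero_le_one))
    rw [Prod.snd_add, intervalIntegral_zero_one,
      snd_integral (h.memLp.integrable one_le_two), h.snd_zero, h.snd_one] at hadd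
    linarith
  have hcs := sq_integral_mul_le h.memLp.snd (memLp_const 1)
  simp only [mul_one, hint, one_pow, integral_const, measureReal_restrict_apply_univ,
    Real.volume_real_Ioc, sub_zero, max_eq_left zero_le_one, one_smul] at hcs
  have hle : ∫ t, (v t).2 ^ 2 ∂unitVolume ≤ ∫ t, ‖v t‖ ^ 2 ∂unitVolume :=
    integral_mono h.memLp.snd.integrable_sq h.memLp.norm.integrable_sq fun t ↦
      sq_le_sq.2 ((norm_snd_le (v t)).trans (le_abs_self _))
  linarith

theorem IsCrossing.energy_pos (hg : IsBandMetric g) (h : IsCrossing γ v) : 0 < energy g γ v := by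
  obtain ⟨c, hc, hle⟩ := hg.exists_mul_integral_sq_norm_le
  exact (mul_pos hc (by linarith [h.four_le_integral_sq_norm])).trans_le (hle γ v h)

theorem energy_comp_affine_le (hg : IsBandMetric g) (h : IsCrossing γ v) {a b : ℝ}
    (ha : a ∈ Icc (0 : ℝ) 1) (hb : b ∈ Icc (0 : ℝ) 1) (hab : a < b) :
    energy g (fun s ↦ γ (a + (b - a) * s)) (fun s ↦ (b - a) • v (a + (b - a) * s)) ≤
      (b - a) * energy g γ v := by
  let f : ℝ → ℝ := fun t ↦ g (γ t) (v t) (v t)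
  have hint : IntervalIntegrable f volume 0 1 :=
    integrable_unitVolume_iff.1 (hg.integrable_energy h.toIsSobolevPath)
  have hnonneg : ∀ᵐ t ∂unitVolume, 0 ≤ f t :=
    ae_unitVolume_of_forall fun t ht ↦ hg.nonneg (h.mem_strip t ht) (v t)
  have hsub := intervalIntegral.smul_integral_comp_add_mul (a := 0) (b := 1) f (b - a) a
  rw [mul_zero, add_zero, mul_one, add_sub_cancel, smul_eq_mul] at hsub
  calc energy g (fun s ↦ γ (a + (b - a) * s)) (fun s ↦ (b - a) • v (a + (b - a) * s))
      = (b - a) * ((b - a) * ∫ s in (0 : ℝ)..1, f (a + (b - a) * s)) := by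
        rw [intervalIntegral_zero_one, energy, ← integral_const_mul,
          ← integral_const_mul]
        simp only [map_smul, smul_apply, smul_eq_mul, f]
    _ = (b - a) * ∫ t in a..b, f t := by rw [hsub]
    _ ≤ (b - a) * ∫ t in (0 : ℝ)..1, f t := by
        have := sub_pos.2 hab
        gcongr
        exact intervalIntegral.integral_mono_interval ha.1 hab.le hb.2 hnonneg hint
    _ = (b - a) * energy g γ v := by
        rw [intervalIntegral_zero_one, energy]

theorem IsMinimizer.one_le_sub (hg : IsBandMetric g) (h : IsMinimizer g γ v) {a b : ℝ}
    (ha : a ∈ Icc (0 : ℝ) 1) (hb : b ∈ Icc (0 : ℝ) 1) (hab : a < b) (hγa : (γ a).2 = -1)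
    (hγb : (γ b).2 = 1) : 1 ≤ b - a := by
  have hcross : IsCrossing (fun s ↦ γ (a + (b - a) * s))
      (fun s ↦ (b - a) • v (a + (b - a) * s)) :=
    { h.toIsSobolevPath.comp_affine ha hb hab with
      snd_zero := by simpa using hγa
      snd_one := by simpa using hγb
      mem_strip := fun s hs ↦ h.mem_strip _
        ⟨by nlinarith [ha.1, hs.1], by nlinarith [hb.2, hs.2]⟩ }
  refine le_of_mul_le_mul_right ?_ (h.toIsCrossing.energy_pos hg)
  rw [one_mul]
  exact (h.energy_le _ _ hcross).trans (energy_comp_affine_le hg h.toIsCrossing ha hb hab)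

theorem IsMinimizer.snd_mem_Ioo (hg : IsBandMetric g) (h : IsMinimizer g γ v) {t : ℝ}
    (ht : t ∈ Ioo (0 : ℝ) 1) : (γ t).2 ∈ Ioo (-1 : ℝ) 1 := by
  have htI := Ioo_subset_Icc_self ht
  refine ⟨lt_of_le_of_ne (h.mem_strip t htI).1 fun heq ↦ ?_,
    lt_of_le_of_ne (h.mem_strip t htI).2 fun heq ↦ ?_⟩
  · linarith [ht.1, h.one_le_sub hg htI (right_mem_Icc.2 zero_le_one) ht.2 heq.symm h.snd_one]
  · linarith [ht.2, h.one_le_sub hg (left_mem_Icc.2 zero_le_one) htI ht.1 h.snd_zero heq]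

theorem eventually_add_smul_mem_strip (hγ : ∀ t ∈ Icc (0 : ℝ) 1, γ t ∈ strip) {C₁ C₂ : ℝ}
    (hlower : ∀ t ∈ Icc (0 : ℝ) 1, |(η t).2| ≤ C₁ * (1 + (γ t).2))
    (hupper : ∀ t ∈ Icc (0 : ℝ) 1, |(η t).2| ≤ C₂ * (1 - (γ t).2)) :
    ∀ᶠ ε in 𝓝 (0 : ℝ), ∀ t ∈ Icc (0 : ℝ) 1, γ t + ε • η t ∈ strip := by
  have hsmall : ∀ C : ℝ, ∀ᶠ ε in 𝓝 (0 : ℝ), |ε| * C < 1 := fun C ↦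
    (by fun_prop : Continuous fun ε : ℝ ↦ |ε| * C).continuousAt.eventually_lt
      continuousAt_const (by simp)
  filter_upwards [hsmall C₁, hsmall C₂] with ε hε₁ hε₂ t ht
  obtain ⟨h₁, h₂⟩ := hγ t ht
  have habs : |ε * (η t).2| = |ε| * |(η t).2| := abs_mul _ _
  have hlow : |ε * (η t).2| ≤ 1 + (γ t).2 := by
    nlinarith [mul_le_mul_of_nonneg_left (hlower t ht) (abs_nonneg ε)]
  have hupp : |ε * (η t).2| ≤ 1 - (γ t).2 := by
    nlinarith [mul_le_mul_of_nonneg_left (hupper t ht) (abs_nonneg ε)]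
  constructor <;> simp only [Prod.snd_add, Prod.smul_snd, smul_eq_mul] <;>
    linarith [abs_le.1 hlow, abs_le.1 hupp]

theorem IsMinimizer.isLocalMin_energy (h : IsMinimizer g γ v) (hη : IsSobolevPath η ζ)
    (h0 : (η 0).2 = 0) (h1 : (η 1).2 = 0)
    (hmem : ∀ᶠ ε in 𝓝 (0 : ℝ), ∀ t ∈ Icc (0 : ℝ) 1, γ t + ε • η t ∈ strip) :
    IsLocalMin (fun ε : ℝ ↦ energy g (fun t ↦ γ t + ε • η t) (fun t ↦ v t + ε • ζ t)) 0 := by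
  filter_upwards [hmem] with ε hε
  simp only [zero_smul, add_zero]
  exact h.energy_le _ _
    { h.toIsSobolevPath.add_smul hη ε with
      snd_zero := by simp [h0, h.snd_zero]
      snd_one := by simp [h1, h.snd_one]
      mem_strip := hε }

variable {V : Type*} [NormedAddCommGroup V] [NormedSpace ℝ V]

/-- The integrand of the first variation of the energy of a path through `p` with velocity `v`,
along a field with value `η` and derivative `ζ`. -/
noncomputable def firstVariation (g : V → V →L[ℝ] V →L[ℝ] ℝ) (p v η ζ : V) : ℝ :=
  fderiv ℝ g p η v v + g p ζ v + g p v ζ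

theorem hasDerivAt_bilin_apply {B : V → V →L[ℝ] V →L[ℝ] ℝ} (hB : Differentiable ℝ B)
    (p η v ζ w ξ : V) (ε : ℝ) :
    HasDerivAt (fun ε : ℝ ↦ B (p + ε • η) (v + ε • ζ) (w + ε • ξ))
      (fderiv ℝ B (p + ε • η) η (v + ε • ζ) (w + ε • ξ) +
        B (p + ε • η) ζ (w + ε • ξ) + B (p + ε • η) (v + ε • ζ) ξ) ε := by
  have hline : ∀ x y : V, HasDerivAt (fun ε : ℝ ↦ x + ε • y) y ε := fun x y ↦ by
    simpa using ((hasDerivAt_id ε).smul_const y).const_add x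
  have hBp : HasDerivAt (fun ε : ℝ ↦ B (p + ε • η)) (fderiv ℝ B (p + ε • η) η) ε :=
    HasFDerivAt.comp_hasDerivAt (l := B) ε (hB (p + ε • η)).hasFDerivAt (hline p η)
  simpa [add_assoc] using (hBp.clm_apply (hline v ζ)).clm_apply (hline w ξ)

theorem norm_variation_le {D B : V →L[ℝ] V →L[ℝ] ℝ} {v ζ : V} {a M r ε : ℝ} (hD : ‖D‖ ≤ a)
    (hB : ‖B‖ ≤ M) (hr : ‖v‖ + ‖ζ‖ ≤ r) (hε : |ε| ≤ 1) :
    ‖D (v + ε • ζ) (v + ε • ζ) + B ζ (v + ε • ζ) + B (v + ε • ζ) ζ‖ ≤ (a + 2 * M) * r ^ 2 := by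
  have hv : ‖v + ε • ζ‖ ≤ r := (norm_add_le _ _).trans <| by
    rw [norm_smul, Real.norm_eq_abs]
    nlinarith [norm_nonneg ζ]
  have hζ : ‖ζ‖ ≤ r := by linarith [norm_nonneg v]
  have happ : ∀ {L : V →L[ℝ] V →L[ℝ] ℝ} {b : ℝ} {x y : V}, ‖L‖ ≤ b → ‖x‖ ≤ r → ‖y‖ ≤ r →
      ‖L x y‖ ≤ b * r ^ 2 := fun {L b x y} hL hx hy ↦ by
    rw [pow_two, ← mul_assoc]
    have hb := (norm_nonneg L).trans hL
    have hr0 := (norm_nonneg x).trans hx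
    exact (L.le_opNorm₂ x y).trans (by gcongr)
  calc _ ≤ a * r ^ 2 + M * r ^ 2 + M * r ^ 2 :=
        norm_add₃_le.trans (add_le_add_three (happ hD hv hv) (happ hB hζ hv) (happ hB hv hζ))
    _ = (a + 2 * M) * r ^ 2 := by ring

theorem exists_norm_variation_le {g : V → V →L[ℝ] V →L[ℝ] ℝ} (hg : ContDiff ℝ 1 g)
    {γ η : ℝ → V} (hγ : ContinuousOn γ (Icc 0 1)) (hη : ContinuousOn η (Icc 0 1)) :
    ∃ a M, ∀ t ∈ Icc (0 : ℝ) 1, ∀ ε : ℝ, |ε| ≤ 1 →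
      ‖fderiv ℝ g (γ t + ε • η t) (η t)‖ ≤ a ∧ ‖g (γ t + ε • η t)‖ ≤ M := by
  let S := Icc (0 : ℝ) 1 ×ˢ Icc (-1 : ℝ) 1
  have hS : IsCompact S := isCompact_Icc.prod isCompact_Icc
  have hγS : ContinuousOn (fun x : ℝ × ℝ ↦ γ x.1) S := hγ.comp continuousOn_fst fun _ hx ↦ hx.1
  have hηS : ContinuousOn (fun x : ℝ × ℝ ↦ η x.1) S := hη.comp continuousOn_fst fun _ hx ↦ hx.1
  have hline : ContinuousOn (fun x : ℝ × ℝ ↦ γ x.1 + x.2 • η x.1) S :=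
    hγS.add (continuousOn_snd.smul hηS)
  let D : ℝ × ℝ → V →L[ℝ] V →L[ℝ] ℝ := fun x ↦ fderiv ℝ g (γ x.1 + x.2 • η x.1) (η x.1)
  let B : ℝ × ℝ → V →L[ℝ] V →L[ℝ] ℝ := fun x ↦ g (γ x.1 + x.2 • η x.1)
  have hD : ContinuousOn D S :=
    ((hg.continuous_fderiv one_ne_zero).comp_continuousOn hline).clm_apply hηS
  have hB : ContinuousOn B S := hg.continuous.comp_continuousOn hline
  obtain ⟨a, ha⟩ := hS.exists_bound_of_continuousOn (f := D) hD
  obtain ⟨M, hM⟩ := hS.exists_bound_of_continuousOn (f := B) hB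
  exact ⟨a, M, fun t ht ε hε ↦ ⟨ha (t, ε) ⟨ht, abs_le.1 hε⟩, hM (t, ε) ⟨ht, abs_le.1 hε⟩⟩⟩

theorem hasDerivAt_energy {g : V → V →L[ℝ] V →L[ℝ] ℝ} (hg : ContDiff ℝ 1 g)
    {γ v η ζ : ℝ → V} (hγ : IsSobolevPath γ v) (hη : IsSobolevPath η ζ) :
    HasDerivAt (fun ε : ℝ ↦ energy g (fun t ↦ γ t + ε • η t) (fun t ↦ v t + ε • ζ t))
      (∫ t, firstVariation g (γ t) (v t) (η t) (ζ t) ∂unitVolume) 0 := by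
  obtain ⟨a, M, haM⟩ := exists_norm_variation_le hg hγ.continuousOn hη.continuousOn
  have hint : ∀ ε : ℝ, Integrable
      (fun t ↦ g (γ t + ε • η t) (v t + ε • ζ t) (v t + ε • ζ t)) unitVolume := fun ε ↦ by
    have hpath := hγ.add_smul hη ε
    exact integrable_bilin (hg.continuous.comp_continuousOn hpath.continuousOn)
      hpath.memLp hpath.memLp
  have hint' : Integrable (fun t ↦ firstVariation g (γ t) (v t) (η t) (ζ t)) unitVolume := by
    have hgγ := hg.continuous.comp_continuousOn hγ.continuousOn
    have hdg := ((hg.continuous_fderiv one_ne_zero).comp_continuousOn hγ.continuousOn).clm_apply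
      hη.continuousOn
    exact ((integrable_bilin hdg hγ.memLp hγ.memLp).add
      (integrable_bilin hgγ hη.memLp hγ.memLp)).add (integrable_bilin hgγ hγ.memLp hη.memLp)
  have hbound : Integrable (fun t ↦ (a + 2 * M) * (‖v t‖ + ‖ζ t‖) ^ 2) unitVolume :=
    ((hγ.memLp.norm.add hη.memLp.norm).integrable_sq).const_mul _
  refine (hasDerivAt_integral_of_dominated_loc_of_deriv_le
    (F := fun ε t ↦ g (γ t + ε • η t) (v t + ε • ζ t) (v t + ε • ζ t))
    (F' := fun ε t ↦ firstVariation g (γ t + ε • η t) (v t + ε • ζ t) (η t) (ζ t))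
    (Metric.ball_mem_nhds (0 : ℝ) one_pos)
    (.of_forall fun ε ↦ (hint ε).aestronglyMeasurable) (hint 0)
    (by simpa using hint'.aestronglyMeasurable)
    (ae_unitVolume_of_forall fun t ht ε hε ↦ ?_) hbound
    (.of_forall fun t ε _ ↦ hasDerivAt_bilin_apply (hg.differentiable one_ne_zero) _ _ _ _ _ _ ε)).2
    |>.congr_deriv (by simp)
  have hε' : |ε| ≤ 1 := by simpa using (mem_ball_zero_iff.1 hε).le
  exact norm_variation_le (haM t ht ε hε').1 (haM t ht ε hε').2 le_rfl hε'

theorem IsMinimizer.integral_variation_eq_zero (hg : IsBandMetric g) (h : IsMinimizer g γ v)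
    (hη : IsSobolevPath η ζ) (h0 : (η 0).2 = 0) (h1 : (η 1).2 = 0)
    (hmem : ∀ᶠ ε in 𝓝 (0 : ℝ), ∀ t ∈ Icc (0 : ℝ) 1, γ t + ε • η t ∈ strip) :
    ∫ t, (fderiv ℝ g (γ t) (η t) (v t) (v t) + 2 * g (γ t) (v t) (ζ t)) ∂unitVolume = 0 := by
  rw [← (h.isLocalMin_energy hη h0 h1 hmem).hasDerivAt_eq_zero
    (hasDerivAt_energy (hg.contDiff.of_le one_le_two) h.toIsSobolevPath hη)]
  simp only [firstVariation, hg.symm (γ _) (ζ _), two_mul, add_assoc]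

end FirstVariation

section DuBoisReymond

theorem integrable_mul_of_continuousOn {f φ : ℝ → ℝ} (hf : Integrable f unitVolume)
    (hφ : ContinuousOn φ (Icc 0 1)) : Integrable (fun t ↦ f t * φ t) unitVolume :=
  integrable_unitVolume_iff.2 ((integrable_unitVolume_iff.1 hf).mul_continuousOn
    (by rwa [uIcc_of_le zero_le_one]))

theorem integral_mul_integral_eq {q ζ : ℝ → ℝ} (hq : Integrable q unitVolume)
    (hζ : Continuous ζ) :
    ∫ t, q t * (∫ s in (0 : ℝ)..t, ζ s) ∂unitVolume =
      (∫ t, q t ∂unitVolume) * (∫ t, ζ t ∂unitVolume) -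
        ∫ t, (∫ s in (0 : ℝ)..t, q s) * ζ t ∂unitVolume := by
  have hq' := integrable_unitVolume_iff.1 hq
  have hζ' : IntervalIntegrable ζ volume 0 1 := hζ.intervalIntegrable 0 1
  have hparts := (hq'.absolutelyContinuousOnInterval_intervalIntegral (c := 0)
    (by simp)).integral_deriv_mul_eq_sub
      (hζ'.absolutelyContinuousOnInterval_intervalIntegral (c := 0) (by simp))
  have hderiv : ∫ t in (0 : ℝ)..1, (q t * (∫ s in (0 : ℝ)..t, ζ s) +
      (∫ s in (0 : ℝ)..t, q s) * ζ t) = (∫ t in (0 : ℝ)..1, q t) * ∫ t in (0 : ℝ)..1, ζ t := by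
    rw [intervalIntegral.integral_same, zero_mul, sub_zero] at hparts
    rw [← hparts]
    refine intervalIntegral.integral_congr_ae ?_
    filter_upwards [hq'.ae_hasDerivAt_integral] with t ht ht'
    rw [(ht (uIoc_subset_uIcc ht') 0 (by simp)).deriv,
      (hζ.integral_hasStrictDerivAt 0 t).hasDerivAt.deriv]
  rw [intervalIntegral_zero_one, intervalIntegral_zero_one, intervalIntegral_zero_one,
    integral_add] at hderiv
  · linarith
  · exact integrable_mul_of_continuousOn hq
      (continuousOn_integral (integrable_unitVolume_iff.2 hζ'))
  · exact integrable_of_continuousOn ((continuousOn_integral hq).mul hζ.continuousOn)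

/-- Derivatives of continuously differentiable functions compactly supported in `(0, 1)`. -/
structure IsTestVelocity (ζ : ℝ → ℝ) : Prop where
  continuous : Continuous ζ
  tsupport_subset : tsupport ζ ⊆ Ioo 0 1
  integral_eq_zero : ∫ t, ζ t ∂unitVolume = 0

theorem setIntegral_unitVolume_of_tsupport_subset {f : ℝ → ℝ} (hf : tsupport f ⊆ Ioo 0 1) :
    ∫ t, f t ∂unitVolume = ∫ t, f t :=
  setIntegral_eq_integral_of_forall_compl_eq_zero fun _ ht ↦ by
    by_contra hne
    exact ht (Ioo_subset_Ioc_self (hf (subset_tsupport _ hne)))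

theorem exists_continuous_integral_eq_one :
    ∃ θ : ℝ → ℝ, Continuous θ ∧ tsupport θ ⊆ Ioo 0 1 ∧ ∫ t, θ t ∂unitVolume = 1 := by
  let B : ContDiffBump (1 / 2 : ℝ) := ⟨1 / 8, 1 / 4, by norm_num, by norm_num⟩
  have hsupp : tsupport (B.normed volume) ⊆ Ioo 0 1 := by
    rw [B.tsupport_normed_eq, Real.closedBall_eq_Icc]
    exact Icc_subset_Ioo (by norm_num [B]) (by norm_num [B])
  exact ⟨B.normed volume, B.continuous_normed, hsupp,
    (setIntegral_unitVolume_of_tsupport_subset hsupp).trans B.integral_normed⟩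

theorem ae_eq_const_of_forall_integral_mul_eq_zero {f : ℝ → ℝ} (hf : Integrable f unitVolume)
    (h : ∀ ζ, IsTestVelocity ζ → ∫ t, f t * ζ t ∂unitVolume = 0) :
    ∃ c, ∀ᵐ t ∂unitVolume, f t = c := by
  obtain ⟨θ, hθ, hθsupp, hθint⟩ := exists_continuous_integral_eq_one
  have hθ1 : Integrable θ unitVolume := integrable_of_continuousOn hθ.continuousOn
  let c := ∫ t, f t * θ t ∂unitVolume
  have hsub : Integrable (fun t ↦ f t - c) unitVolume := hf.sub (integrable_const c)
  have hzero : ∀ᵐ t, t ∈ Ioo (0 : ℝ) 1 → f t - c = 0 := by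
    refine isOpen_Ioo.ae_eq_zero_of_integral_contDiff_smul_eq_zero
      (IntegrableOn.mono_set hsub Ioo_subset_Ioc_self).locallyIntegrableOn fun ψ hψ _ hsupp ↦ ?_
    have hψ1 : Integrable ψ unitVolume :=
      integrable_of_continuousOn hψ.continuous.continuousOn
    let k := ∫ t, ψ t ∂unitVolume
    have htest : IsTestVelocity fun t ↦ ψ t - k * θ t :=
      { continuous := hψ.continuous.sub (continuous_const.mul hθ)
        tsupport_subset := (tsupport_sub _ _).trans <| union_subset hsupp <|
          (closure_mono (Function.support_mul_subset_right (fun _ ↦ k) θ)).trans hθsupp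
        integral_eq_zero := by
          rw [integral_sub hψ1 (hθ1.const_mul k), integral_const_mul, hθint, mul_one, sub_self] }
    have hfψ := integrable_mul_of_continuousOn hf hψ.continuous.continuousOn
    have hfθ := integrable_mul_of_continuousOn hf hθ.continuousOn
    have htest' := h _ htest
    simp only [mul_sub, mul_left_comm _ k] at htest'
    rw [integral_sub hfψ (hfθ.const_mul k), integral_const_mul] at htest'
    calc ∫ t, ψ t • (f t - c) = ∫ t, (f t * ψ t - c * ψ t) ∂unitVolume := by
          refine (setIntegral_unitVolume_of_tsupport_subset (f := fun t ↦ ψ t • (f t - c))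
            ((closure_mono (Function.support_smul_subset_left ψ _)).trans hsupp)).symm.trans ?_
          exact integral_congr_ae (.of_forall fun t ↦ by simp only [smul_eq_mul]; ring)
      _ = 0 := by
          rw [integral_sub hfψ (hψ1.const_mul c), integral_const_mul, mul_comm]
          exact htest'
  refine ⟨c, ?_⟩
  filter_upwards [ae_restrict_of_ae hzero, ae_restrict_of_ae (volume.ae_ne 1),
    ae_restrict_mem measurableSet_Ioc] with t ht ht1 hmem
  exact sub_eq_zero.1 (ht ⟨hmem.1, hmem.2.lt_of_ne ht1⟩)

theorem exists_ae_eq_add_integral {p q : ℝ → ℝ} (hp : Integrable p unitVolume)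
    (hq : Integrable q unitVolume)
    (h : ∀ ζ, IsTestVelocity ζ →
      ∫ t, (q t * (∫ s in (0 : ℝ)..t, ζ s) + p t * ζ t) ∂unitVolume = 0) :
    ∃ c, ∀ᵐ t ∂unitVolume, p t = c + ∫ s in (0 : ℝ)..t, q s := by
  have hQ : Integrable (fun t ↦ ∫ s in (0 : ℝ)..t, q s) unitVolume :=
    integrable_of_continuousOn (continuousOn_integral hq)
  obtain ⟨c, hc⟩ := ae_eq_const_of_forall_integral_mul_eq_zero (hp.sub hQ) fun ζ hζ ↦ by
    have hζ' := hζ.continuous.continuousOn (s := Icc 0 1)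
    have hζ1 : Integrable ζ unitVolume := integrable_of_continuousOn hζ'
    have hpζ := integrable_mul_of_continuousOn hp hζ'
    have htest := h ζ hζ
    rw [integral_add (integrable_mul_of_continuousOn hq (continuousOn_integral hζ1)) hpζ,
      integral_mul_integral_eq hq hζ.continuous, hζ.integral_eq_zero] at htest
    simp only [Pi.sub_apply, sub_mul]
    rw [integral_sub hpζ (integrable_mul_of_continuousOn hQ hζ')]
    linarith
  exact ⟨c, hc.mono fun t ht ↦ sub_eq_iff_eq_add.1 ht⟩

theorem IsTestVelocity.integral_eq_zero_of_notMem {ζ : ℝ → ℝ} (hζ : IsTestVelocity ζ)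
    {a b : ℝ} (hab : tsupport ζ ⊆ Icc a b) {t : ℝ} (ht : t ∈ Icc (0 : ℝ) 1) (htab : t ∉ Icc a b) :
    ∫ s in (0 : ℝ)..t, ζ s = 0 := by
  have hzero : ∀ s ∉ Icc a b, ζ s = 0 := fun s hs ↦
    image_eq_zero_of_notMem_tsupport fun h ↦ hs (hab h)
  have hint : ∀ x y, IntervalIntegrable ζ volume x y := hζ.continuous.intervalIntegrable
  rcases not_and_or.1 htab with hta | htb
  · refine intervalIntegral.integral_zero_ae (.of_forall fun s hs ↦ hzero s fun hs' ↦ hta ?_)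
    rw [uIoc_of_le ht.1] at hs
    exact hs'.1.trans hs.2
  · have htail : ∫ s in t..1, ζ s = 0 := by
      refine intervalIntegral.integral_zero_ae (.of_forall fun s hs ↦ hzero s fun hs' ↦ htb ?_)
      rw [uIoc_of_le ht.2] at hs
      exact hs.1.le.trans hs'.2
    have hadd := intervalIntegral.integral_add_adjacent_intervals (hint 0 t) (hint t 1)
    rwa [htail, add_zero, intervalIntegral_zero_one, hζ.integral_eq_zero] at hadd

theorem IsTestVelocity.exists_abs_integral_le {ζ f : ℝ → ℝ} (hζ : IsTestVelocity ζ)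
    (hf : ContinuousOn f (Icc 0 1)) (hpos : ∀ t ∈ Ioo (0 : ℝ) 1, 0 < f t)
    (hnonneg : ∀ t ∈ Icc (0 : ℝ) 1, 0 ≤ f t) :
    ∃ C, ∀ t ∈ Icc (0 : ℝ) 1, |∫ s in (0 : ℝ)..t, ζ s| ≤ C * f t := by
  have hcompact : IsCompact (tsupport ζ) := isCompact_Icc.of_isClosed_subset
    (isClosed_tsupport ζ) (hζ.tsupport_subset.trans Ioo_subset_Icc_self)
  obtain ⟨δ, hδ, hthick⟩ := hcompact.exists_cthickening_subset_open isOpen_Ioo hζ.tsupport_subset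
  have hsupp : tsupport ζ ⊆ Icc δ (1 - δ) := fun x hx ↦ by
    have hmem : ∀ y, |y - x| ≤ δ → y ∈ Ioo (0 : ℝ) 1 := fun y hy ↦
      hthick (Metric.mem_cthickening_of_dist_le y x δ _ hx hy)
    have hlow := hmem (x - δ) (by simp [abs_of_pos hδ])
    have hupp := hmem (x + δ) (by simp [abs_of_pos hδ])
    exact ⟨by linarith [hlow.1], by linarith [hupp.2]⟩
  have hK : Icc δ (1 - δ) ⊆ Ioo 0 1 := Icc_subset_Ioo hδ (by linarith)
  have hcont : ContinuousOn (fun t ↦ (∫ s in (0 : ℝ)..t, ζ s) / f t) (Icc δ (1 - δ)) :=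
    (intervalIntegral.continuous_primitive hζ.continuous.intervalIntegrable 0).continuousOn.div
      (hf.mono (hK.trans Ioo_subset_Icc_self)) fun t ht ↦ (hpos t (hK ht)).ne'
  obtain ⟨C, hC⟩ := isCompact_Icc.exists_bound_of_continuousOn hcont
  refine ⟨max C 0, fun t ht ↦ ?_⟩
  by_cases htK : t ∈ Icc δ (1 - δ)
  · have hft := hpos t (hK htK)
    have := hC t htK
    rw [Real.norm_eq_abs, abs_div, abs_of_pos hft, div_le_iff₀ hft] at this
    exact this.trans (by gcongr; exact le_max_left C 0)
  · rw [hζ.integral_eq_zero_of_notMem hsupp ht htK, abs_zero]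
    exact mul_nonneg (le_max_right C 0) (hnonneg t ht)

end DuBoisReymond

section Regularity

theorem isInvertible_of_forall_apply_eq_zero {V : Type*} [NormedAddCommGroup V] [NormedSpace ℝ V]
    [FiniteDimensional ℝ V] {B : V →L[ℝ] V →L[ℝ] ℝ} (hB : ∀ v, B v = 0 → v = 0) :
    B.IsInvertible := by
  let toDual : V →ₗ[ℝ] Module.Dual ℝ V := LinearMap.toContinuousLinearMap.symm.toLinearMap ∘ₗ B
  have hinj : Function.Injective toDual := (injective_iff_map_eq_zero toDual).2 fun v hv ↦
    hB v (ContinuousLinearMap.coe_injective hv)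
  let e : V ≃ₗ[ℝ] V →L[ℝ] ℝ :=
    (LinearMap.linearEquivOfInjective toDual hinj Subspace.dual_finrank_eq.symm).trans
      LinearMap.toContinuousLinearMap
  exact ⟨e.toContinuousLinearEquiv, rfl⟩

theorem IsBandMetric.eq_zero_of_apply_eq_zero {g : ℝ × ℝ → ℝ × ℝ →L[ℝ] ℝ × ℝ →L[ℝ] ℝ}
    (hg : IsBandMetric g) {p : ℝ × ℝ} (hp : p ∈ strip) {v : ℝ × ℝ} (hv : g p v = 0) : v = 0 := by
  by_contra hne
  exact (hg.pos p hp v hne).ne' (by simp [hv])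

theorem IsBandMetric.isInvertible {g : ℝ × ℝ → ℝ × ℝ →L[ℝ] ℝ × ℝ →L[ℝ] ℝ} (hg : IsBandMetric g)
    {p : ℝ × ℝ} (hp : p ∈ strip) : (g p).IsInvertible :=
  isInvertible_of_forall_apply_eq_zero fun _ ↦ hg.eq_zero_of_apply_eq_zero hp

theorem IsBandMetric.contDiffAt_inverse {g : ℝ × ℝ → ℝ × ℝ →L[ℝ] ℝ × ℝ →L[ℝ] ℝ}
    (hg : IsBandMetric g) {p : ℝ × ℝ} (hp : p ∈ strip) :
    ContDiffAt ℝ 2 (fun q ↦ (g q).inverse) p :=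
  (hg.isInvertible hp).contDiffAt_map_inverse.comp p hg.contDiff.contDiffAt

variable {g : ℝ × ℝ → ℝ × ℝ →L[ℝ] ℝ × ℝ →L[ℝ] ℝ} {γ v : ℝ → ℝ × ℝ}

theorem integrable_fderiv_apply (hg : IsBandMetric g) (h : IsSobolevPath γ v) (e : ℝ × ℝ) :
    Integrable (fun t ↦ fderiv ℝ g (γ t) e (v t) (v t)) unitVolume :=
  integrable_bilin (((hg.contDiff.continuous_fderiv two_ne_zero).comp_continuousOn
    h.continuousOn).clm_apply continuousOn_const) h.memLp h.memLp

theorem IsMinimizer.integral_testVelocity_eq_zero (hg : IsBandMetric g) (h : IsMinimizer g γ v)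
    {ζ : ℝ → ℝ} (hζ : IsTestVelocity ζ) (e : ℝ × ℝ) :
    ∫ t, (fderiv ℝ g (γ t) e (v t) (v t) * (∫ s in (0 : ℝ)..t, ζ s) +
      2 * g (γ t) (v t) e * ζ t) ∂unitVolume = 0 := by
  have hγ : ContinuousOn (fun t ↦ (γ t).2) (Icc 0 1) := continuous_snd.comp_continuousOn
    h.continuousOn
  have hγIcc : ∀ t ∈ Icc (0 : ℝ) 1, (γ t).2 ∈ Icc (-1 : ℝ) 1 := h.mem_strip
  obtain ⟨C₁, hC₁⟩ := hζ.exists_abs_integral_le (f := fun t ↦ 1 + (γ t).2)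
    (continuousOn_const.add hγ) (fun t ht ↦ by linarith [(h.snd_mem_Ioo hg ht).1])
    fun t ht ↦ by linarith [(hγIcc t ht).1]
  obtain ⟨C₂, hC₂⟩ := hζ.exists_abs_integral_le (f := fun t ↦ 1 - (γ t).2)
    (continuousOn_const.sub hγ) (fun t ht ↦ by linarith [(h.snd_mem_Ioo hg ht).2])
    fun t ht ↦ by linarith [(hγIcc t ht).2]
  let η : ℝ → ℝ × ℝ := fun t ↦ (∫ s in (0 : ℝ)..t, ζ s) • e
  have hη : IsSobolevPath η fun t ↦ ζ t • e := by
    refine ⟨memLp_of_continuousOn (hζ.continuous.smul continuous_const).continuousOn 2,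
      fun t _ ↦ ?_⟩
    simp only [η, intervalIntegral.integral_smul_const, intervalIntegral.integral_same, zero_smul,
      zero_add]
  have hbound : ∀ {C : ℝ} {f : ℝ → ℝ},
      (∀ t ∈ Icc (0 : ℝ) 1, |∫ s in (0 : ℝ)..t, ζ s| ≤ C * f t) →
      ∀ t ∈ Icc (0 : ℝ) 1, |(η t).2| ≤ |e.2| * C * f t := fun {C f} hle t ht ↦ by
    simp only [η, Prod.smul_snd, smul_eq_mul, abs_mul]
    rw [mul_comm, mul_assoc]
    exact mul_le_mul_of_nonneg_left (hle t ht) (abs_nonneg _)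
  have hvar := h.integral_variation_eq_zero hg hη (by simp [η])
    (by simp [η, intervalIntegral_zero_one, hζ.integral_eq_zero])
    (eventually_add_smul_mem_strip h.mem_strip (hbound hC₁) (hbound hC₂))
  refine Eq.trans (integral_congr_ae (.of_forall fun t ↦ ?_)) hvar
  simp only [η, map_smul, smul_apply, smul_eq_mul]
  ring

theorem IsMinimizer.exists_momentum_ae_eq (hg : IsBandMetric g) (h : IsMinimizer g γ v)
    (e : ℝ × ℝ) : ∃ c, ∀ᵐ t ∂unitVolume,
      2 * g (γ t) (v t) e = c + ∫ s in (0 : ℝ)..t, fderiv ℝ g (γ s) e (v s) (v s) := by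
  refine exists_ae_eq_add_integral ?_ (integrable_fderiv_apply hg h.toIsSobolevPath e)
    fun ζ hζ ↦ h.integral_testVelocity_eq_zero hg hζ e
  exact (integrable_bilin (hg.continuousOn_comp h.toIsSobolevPath) h.memLp
    (memLp_const e)).const_mul 2

theorem IsMinimizer.exists_continuousOn_ae_eq (hg : IsBandMetric g) (h : IsMinimizer g γ v) :
    ∃ w, ContinuousOn w (Icc 0 1) ∧ v =ᵐ[unitVolume] w := by
  let P (c : ℝ) (e : ℝ × ℝ) (t : ℝ) : ℝ :=
    c + ∫ s in (0 : ℝ)..t, fderiv ℝ g (γ s) e (v s) (v s)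
  have hP : ∀ c e, ContinuousOn (P c e) (Icc 0 1) := fun c e ↦ continuousOn_const.add
    (continuousOn_integral (integrable_fderiv_apply hg h.toIsSobolevPath e))
  obtain ⟨c₁, hc₁⟩ := h.exists_momentum_ae_eq hg (1, 0)
  obtain ⟨c₂, hc₂⟩ := h.exists_momentum_ae_eq hg (0, 1)
  let momentum (t : ℝ) : ℝ × ℝ →L[ℝ] ℝ :=
    (P c₁ (1, 0) t / 2) • .fst ℝ ℝ ℝ + (P c₂ (0, 1) t / 2) • .snd ℝ ℝ ℝ
  refine ⟨fun t ↦ (g (γ t)).inverse (momentum t), ?_, ?_⟩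
  · refine ContinuousOn.clm_apply (fun t ht ↦ ?_) ?_
    · exact (hg.contDiffAt_inverse (h.mem_strip t ht)).continuousAt.comp_continuousWithinAt
        (h.continuousOn t ht)
    · exact (((hP _ _).div_const 2).smul continuousOn_const).add
        (((hP _ _).div_const 2).smul continuousOn_const)
  · filter_upwards [hc₁, hc₂, ae_unitVolume_of_forall h.mem_strip] with t h₁ h₂ hmem
    have hmom : momentum t = g (γ t) (v t) := ContinuousLinearMap.ext fun e ↦ by
      rw [dual_apply_eq (g (γ t) (v t))]
      simp only [momentum, P, ← h₁, ← h₂, add_apply, smul_apply, smul_eq_mul,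
        ContinuousLinearMap.coe_fst', ContinuousLinearMap.coe_snd']
      ring
    rw [hmom, (hg.isInvertible hmem).inverse_apply_self]

theorem IsMinimizer.congr {γ' v' : ℝ → ℝ × ℝ} (h : IsMinimizer g γ v) (hγ : EqOn γ γ' (Icc 0 1))
    (hv : v =ᵐ[unitVolume] v') : IsMinimizer g γ' v' := by
  have h0 : (0 : ℝ) ∈ Icc (0 : ℝ) 1 := left_mem_Icc.2 zero_le_one
  refine
    { memLp := (h.congr_velocity hv).memLp
      eq_add_integral := fun t ht ↦ by
        rw [← hγ ht, ← hγ h0, (h.congr_velocity hv).eq_add_integral t ht]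
      snd_zero := hγ h0 ▸ h.snd_zero
      snd_one := hγ (right_mem_Icc.2 zero_le_one) ▸ h.snd_one
      mem_strip := fun t ht ↦ hγ ht ▸ h.mem_strip t ht
      energy_le := fun η ζ hη ↦ le_of_eq_of_le ?_ (h.energy_le η ζ hη) }
  refine integral_congr_ae ?_
  filter_upwards [hv, ae_unitVolume_of_forall hγ] with t hvt hγt
  rw [hvt, hγt]

/-- The first variation forces `2 g(v, ·)` to agree almost everywhere with a continuous covector,
and inverting the metric makes `v` continuous. -/
theorem IsBandMetric.exists_contDiff_isMinimizer (hg : IsBandMetric g) :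
    ∃ γ, ContDiff ℝ 1 γ ∧ IsMinimizer g γ (deriv γ) := by
  obtain ⟨γ, v, h⟩ := hg.exists_isMinimizer
  obtain ⟨w, hw, hvw⟩ := h.exists_continuousOn_ae_eq hg
  let w' := IccExtend (zero_le_one' ℝ) ((Icc (0 : ℝ) 1).domRestrict w)
  have hw' : Continuous w' := hw.domRestrict.Icc_extend'
  have hww' : EqOn w w' (Icc 0 1) := fun t ht ↦ by
    simp [w', IccExtend_of_mem _ _ ht]
  have hvw' : v =ᵐ[unitVolume] w' := hvw.trans (ae_unitVolume_of_forall hww')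
  let γ' : ℝ → ℝ × ℝ := fun t ↦ γ 0 + ∫ s in (0 : ℝ)..t, w' s
  have hderiv : ∀ t, HasDerivAt γ' (w' t) t := fun t ↦
    (hw'.integral_hasStrictDerivAt 0 t).hasDerivAt.const_add (γ 0)
  have hderiv' : deriv γ' = w' := funext fun t ↦ (hderiv t).deriv
  refine ⟨γ', contDiff_one_iff_deriv.2 ⟨fun t ↦ (hderiv t).differentiableAt, hderiv' ▸ hw'⟩, ?_⟩
  exact h.congr (h.congr_velocity hvw').eq_add_integral (hderiv' ▸ hvw')

end Regularity

section ParallelFields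

variable {V : Type*} [NormedAddCommGroup V] [NormedSpace ℝ V] {g : V → V →L[ℝ] V →L[ℝ] ℝ}

/-- The Christoffel symbols of the first kind `Γ(v, w; ·)` of a metric `g`. -/
noncomputable def christoffelLower (g : V → V →L[ℝ] V →L[ℝ] ℝ) (p v w : V) : V →L[ℝ] ℝ :=
  (1 / 2 : ℝ) • (fderiv ℝ g p v w + fderiv ℝ g p w v - ((fderiv ℝ g p).flip v).flip w)

/-- The Christoffel symbols `Γ(v, w)` of a metric `g`: the covariant derivative of a field `X` along
a path `γ` is `X' + Γ(γ', X)`. -/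
noncomputable def christoffel (g : V → V →L[ℝ] V →L[ℝ] ℝ) (p v w : V) : V :=
  (g p).inverse (christoffelLower g p v w)

theorem christoffelLower_apply (p v w z : V) : christoffelLower g p v w z =
    (fderiv ℝ g p v w z + fderiv ℝ g p w v z - fderiv ℝ g p z v w) / 2 := by
  simp only [christoffelLower, smul_apply, sub_apply, add_apply, smul_eq_mul,
    ContinuousLinearMap.flip_apply]
  ring

theorem apply_christoffel {p : V} (hp : (g p).IsInvertible) (v w : V) :
    g p (christoffel g p v w) = christoffelLower g p v w :=
  hp.self_apply_inverse _

theorem fderiv_apply_comm (hg : Differentiable ℝ g) (hsymm : ∀ p v w, g p v w = g p w v)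
    (p e v w : V) : fderiv ℝ g p e v w = fderiv ℝ g p e w v := by
  have h₁ := hasDerivAt_bilin_apply hg p e v 0 w 0 0
  have h₂ := hasDerivAt_bilin_apply hg p e w 0 v 0 0
  simp only [hsymm _ (w + _)] at h₂
  simpa using h₁.unique h₂

theorem hasDerivAt_metric_apply (hg : Differentiable ℝ g) (hsymm : ∀ p v w, g p v w = g p w v)
    {γ X Y : ℝ → V} {T X' Y' : V} {t : ℝ} (hinv : (g (γ t)).IsInvertible)
    (hγ : HasDerivAt γ T t) (hX : HasDerivAt X X' t) (hY : HasDerivAt Y Y' t) :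
    HasDerivAt (fun s ↦ g (γ s) (X s) (Y s))
      (g (γ t) (X' + christoffel g (γ t) T (X t)) (Y t) +
        g (γ t) (X t) (Y' + christoffel g (γ t) T (Y t))) t := by
  have hgγ : HasDerivAt (fun s ↦ g (γ s)) (fderiv ℝ g (γ t) T) t :=
    HasFDerivAt.comp_hasDerivAt (l := g) t (hg (γ t)).hasFDerivAt hγ
  refine ((hgγ.clm_apply hX).clm_apply hY).congr_deriv ?_
  rw [hsymm (γ t) (X t) (Y' + _)]
  simp only [map_add, add_apply, apply_christoffel hinv, christoffelLower_apply]
  rw [hsymm (γ t) Y', fderiv_apply_comm hg hsymm _ _ (Y t), fderiv_apply_comm hg hsymm _ _ _ (Y t),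
    fderiv_apply_comm hg hsymm _ _ T (X t)]
  ring

/-- A vector field `X` along `γ : [0, 1] → V` with vanishing covariant derivative. -/
structure IsParallel (g : V → V →L[ℝ] V →L[ℝ] ℝ) (γ X : ℝ → V) : Prop where
  continuousOn : ContinuousOn X (Icc 0 1)
  hasDerivAt : ∀ t ∈ Ioo (0 : ℝ) 1,
    HasDerivAt X (-christoffel g (γ t) (deriv γ t) (X t)) t

theorem IsParallel.metric_apply_eq (hg : Differentiable ℝ g)
    (hsymm : ∀ p v w, g p v w = g p w v) {γ X Y : ℝ → V} (hγ : Differentiable ℝ γ)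
    (hinv : ∀ t ∈ Ioo (0 : ℝ) 1, (g (γ t)).IsInvertible) (hX : IsParallel g γ X)
    (hY : IsParallel g γ Y) {t : ℝ} (ht : t ∈ Icc (0 : ℝ) 1) :
    g (γ t) (X t) (Y t) = g (γ 0) (X 0) (Y 0) := by
  have hcont : ContinuousOn (fun s ↦ g (γ s) (X s) (Y s)) (Icc 0 t) :=
    (((hg.continuous.comp hγ.continuous).continuousOn.clm_apply hX.continuousOn).clm_apply
      hY.continuousOn).mono (Icc_subset_Icc_right ht.2)
  have hderiv : ∀ s ∈ Ioo 0 t, HasDerivAt (fun s ↦ g (γ s) (X s) (Y s)) 0 s := fun s hs ↦ by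
    have hs' : s ∈ Ioo (0 : ℝ) 1 := ⟨hs.1, hs.2.trans_le ht.2⟩
    simpa using hasDerivAt_metric_apply hg hsymm (hinv s hs') (hγ s).hasDerivAt
      (hX.hasDerivAt s hs') (hY.hasDerivAt s hs')
  have hint := intervalIntegral.integral_eq_sub_of_hasDerivAt_of_le ht.1 hcont hderiv (by simp)
  simpa [eq_comm (a := (0 : ℝ)), sub_eq_zero] using hint

end ParallelFields

section Geodesics

variable {g : ℝ × ℝ → ℝ × ℝ →L[ℝ] ℝ × ℝ →L[ℝ] ℝ} {γ : ℝ → ℝ × ℝ}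

theorem IsBandMetric.differentiable (hg : IsBandMetric g) : Differentiable ℝ g :=
  hg.contDiff.differentiable two_ne_zero

theorem continuous_fderiv_apply_deriv (hg : ContDiff ℝ 1 g) (hγ : ContDiff ℝ 1 γ) (e : ℝ × ℝ) :
    Continuous fun t ↦ fderiv ℝ g (γ t) e (deriv γ t) (deriv γ t) := by
  have hT : Continuous (deriv γ) := hγ.continuous_deriv le_rfl
  have hdg : Continuous fun t ↦ fderiv ℝ g (γ t) e :=
    ((hg.continuous_fderiv one_ne_zero).comp hγ.continuous).clm_apply continuous_const
  exact (hdg.clm_apply hT).clm_apply hT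

theorem continuous_metric_apply {X Y : ℝ → ℝ × ℝ} (hg : Continuous g) (hγ : Continuous γ)
    (hX : Continuous X) (hY : Continuous Y) : Continuous fun t ↦ g (γ t) (X t) (Y t) :=
  ((hg.comp hγ).clm_apply hX).clm_apply hY

variable (hg : IsBandMetric g) (hγ : ContDiff ℝ 1 γ) (h : IsMinimizer g γ (deriv γ))
include hg hγ h

theorem IsMinimizer.hasDerivAt_momentum_apply (e : ℝ × ℝ) {t : ℝ} (ht : t ∈ Ioo (0 : ℝ) 1) :
    HasDerivAt (fun s ↦ g (γ s) (deriv γ s) e)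
      (fderiv ℝ g (γ t) e (deriv γ t) (deriv γ t) / 2) t := by
  obtain ⟨c, hc⟩ := h.exists_momentum_ae_eq hg e
  have hQ := continuous_fderiv_apply_deriv (hg.contDiff.of_le one_le_two) hγ e
  have hprim : ∀ s, HasDerivAt
      (fun s ↦ c + ∫ r in (0 : ℝ)..s, fderiv ℝ g (γ r) e (deriv γ r) (deriv γ r))
      (fderiv ℝ g (γ s) e (deriv γ s) (deriv γ s)) s := fun s ↦
    (hQ.integral_hasStrictDerivAt 0 s).hasDerivAt.const_add c
  have hmom : Continuous fun s ↦ 2 * g (γ s) (deriv γ s) e := continuous_const.mul <|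
    continuous_metric_apply hg.contDiff.continuous hγ.continuous
      (hγ.continuous_deriv le_rfl) continuous_const
  have heq := Measure.eqOn_Icc_of_ae_eq volume zero_ne_one
    (by rwa [Measure.restrict_congr_set Ioc_ae_eq_Icc.symm]) hmom.continuousOn
    (continuous_iff_continuousAt.2 fun s ↦ (hprim s).continuousAt).continuousOn
  have hderiv := ((hprim t).congr_of_eventuallyEq
    (heq.eventuallyEq_of_mem (Icc_mem_nhds ht.1 ht.2))).div_const 2
  simpa using hderiv

theorem IsMinimizer.momentum_boundary :
    g (γ 0) (deriv γ 0) (1, 0) = 0 ∧ g (γ 1) (deriv γ 1) (1, 0) = 0 := by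
  let P (t : ℝ) : ℝ := g (γ t) (deriv γ t) (1, 0)
  let Q (t : ℝ) : ℝ := fderiv ℝ g (γ t) (1, 0) (deriv γ t) (deriv γ t)
  have hQ : Continuous Q := continuous_fderiv_apply_deriv (hg.contDiff.of_le one_le_two) hγ (1, 0)
  have hP : Continuous P := continuous_metric_apply hg.contDiff.continuous hγ.continuous
    (hγ.continuous_deriv le_rfl) continuous_const
  have hderiv : ∀ t ∈ Ioo (0 : ℝ) 1, HasDerivAt P (Q t / 2) t := fun t ht ↦
    h.hasDerivAt_momentum_apply hg hγ (1, 0) ht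
  have hzero : ∫ t in (0 : ℝ)..1, Q t = 0 := by
    have hvar := h.integral_variation_eq_zero hg (η := fun _ ↦ (1, 0)) (ζ := fun _ ↦ 0)
      (.of_hasDerivAt continuousOn_const continuousOn_const fun t _ ↦ hasDerivAt_const t _) rfl rfl
      (eventually_add_smul_mem_strip (C₁ := 0) (C₂ := 0) h.mem_strip (by simp) (by simp))
    simpa [← intervalIntegral_zero_one] using hvar
  have hone : ∫ t in (0 : ℝ)..1, (t * Q t + 2 * P t) = 0 := by
    have hvar := h.integral_variation_eq_zero hg (η := fun t ↦ (t, 0)) (ζ := fun _ ↦ (1, 0))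
      (.of_hasDerivAt (by fun_prop) continuousOn_const fun t _ ↦
        (hasDerivAt_id t).prodMk (hasDerivAt_const t 0)) rfl rfl
      (eventually_add_smul_mem_strip (C₁ := 0) (C₂ := 0) h.mem_strip (by simp) (by simp))
    rw [intervalIntegral_zero_one, ← hvar]
    refine integral_congr_ae (.of_forall fun t ↦ ?_)
    have he : ((t, 0) : ℝ × ℝ) = t • (1, 0) := by simp
    simp only [he, map_smul, smul_apply, smul_eq_mul, P, Q]
  have hsub := intervalIntegral.integral_eq_sub_of_hasDerivAt_of_le zero_le_one hP.continuousOn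
    hderiv ((hQ.div_const 2).intervalIntegrable 0 1)
  have hmul := intervalIntegral.integral_eq_sub_of_hasDerivAt_of_le zero_le_one
    (f := fun t ↦ 2 * (t * P t)) (f' := fun t ↦ t * Q t + 2 * P t) (by fun_prop)
    (fun t ht ↦ (((hasDerivAt_id t).mul (hderiv t ht)).const_mul 2).congr_deriv (by simp; ring))
    (by apply Continuous.intervalIntegrable; fun_prop)
  rw [intervalIntegral.integral_div, hzero] at hsub
  rw [hone] at hmul
  constructor <;> linarith

theorem IsMinimizer.isParallel_deriv : IsParallel g γ (deriv γ) := by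
  have hT : Continuous (deriv γ) := hγ.continuous_deriv le_rfl
  refine ⟨hT.continuousOn, fun t ht ↦ ?_⟩
  have hmem := h.mem_strip t (Ioo_subset_Icc_self ht)
  have hγt : HasDerivAt γ (deriv γ t) t := (hγ.differentiable one_ne_zero t).hasDerivAt
  have hmom : DifferentiableAt ℝ (fun s ↦ g (γ s) (deriv γ s)) t := by
    refine DifferentiableAt.congr_of_eventuallyEq (.add
      ((h.hasDerivAt_momentum_apply hg hγ (1, 0) ht).smul_const (.fst ℝ ℝ ℝ)).differentiableAt
      ((h.hasDerivAt_momentum_apply hg hγ (0, 1) ht).smul_const (.snd ℝ ℝ ℝ)).differentiableAt)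
      (.of_forall fun s ↦ ContinuousLinearMap.ext fun e ↦ ?_)
    rw [dual_apply_eq (g (γ s) (deriv γ s))]
    simp [mul_comm]
  have hinv : DifferentiableAt ℝ (fun s ↦ (g (γ s)).inverse) t :=
    DifferentiableAt.comp t ((hg.contDiffAt_inverse hmem).differentiableAt two_ne_zero)
      hγt.differentiableAt
  have hTdiff : DifferentiableAt ℝ (deriv γ) t := by
    refine (hinv.clm_apply hmom).congr_of_eventuallyEq ?_
    filter_upwards [Icc_mem_nhds ht.1 ht.2] with s hs
    exact ((hg.isInvertible (h.mem_strip s hs)).inverse_apply_self _).symm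
  have hzero : ∀ e, g (γ t) (deriv (deriv γ) t + christoffel g (γ t) (deriv γ t) (deriv γ t)) e =
      0 := fun e ↦ by
    have hmetric := (hasDerivAt_metric_apply hg.differentiable hg.symm (hg.isInvertible hmem) hγt
      hTdiff.hasDerivAt (hasDerivAt_const t e)).unique (h.hasDerivAt_momentum_apply hg hγ e ht)
    rw [hg.symm _ (deriv γ t), zero_add, apply_christoffel (hg.isInvertible hmem),
      christoffelLower_apply, fderiv_apply_comm hg.differentiable hg.symm _ _ e] at hmetric
    linarith
  have hgeod : deriv (deriv γ) t = -christoffel g (γ t) (deriv γ t) (deriv γ t) :=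
    eq_neg_of_add_eq_zero_left (hg.eq_zero_of_apply_eq_zero hmem (ContinuousLinearMap.ext hzero))
  exact hgeod ▸ hTdiff.hasDerivAt

theorem IsMinimizer.metric_deriv_eq_energy {t : ℝ} (ht : t ∈ Icc (0 : ℝ) 1) :
    g (γ t) (deriv γ t) (deriv γ t) = energy g γ (deriv γ) := by
  have hT := h.isParallel_deriv hg hγ
  have hconst : ∀ s ∈ Icc (0 : ℝ) 1,
      g (γ s) (deriv γ s) (deriv γ s) = g (γ 0) (deriv γ 0) (deriv γ 0) := fun s hs ↦
    IsParallel.metric_apply_eq hg.differentiable hg.symm (hγ.differentiable one_ne_zero)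
      (fun r hr ↦ hg.isInvertible (h.mem_strip r (Ioo_subset_Icc_self hr))) hT hT hs
  rw [hconst t ht, energy, integral_congr_ae (ae_unitVolume_of_forall hconst)]
  simp

end Geodesics

section NormalFields

/-- The Gram determinant of a bilinear form on the plane in the standard basis. -/
noncomputable def gramDet (B : ℝ × ℝ →L[ℝ] ℝ × ℝ →L[ℝ] ℝ) : ℝ :=
  B (1, 0) (1, 0) * B (0, 1) (0, 1) - B (1, 0) (0, 1) ^ 2

/-- The vector `v` rotated by a right angle with respect to the inner product `B`. -/
noncomputable def rightAngle (B : ℝ × ℝ →L[ℝ] ℝ × ℝ →L[ℝ] ℝ) (v : ℝ × ℝ) : ℝ × ℝ :=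
  (√(gramDet B))⁻¹ • (-B v (0, 1), B v (1, 0))

variable {B : ℝ × ℝ →L[ℝ] ℝ × ℝ →L[ℝ] ℝ}

theorem bilin_apply_eq (hB : ∀ v w, B v w = B w v) (v w : ℝ × ℝ) :
    B v w = B (1, 0) (1, 0) * (v.1 * w.1) + B (1, 0) (0, 1) * (v.1 * w.2 + v.2 * w.1) +
      B (0, 1) (0, 1) * (v.2 * w.2) := by
  rw [dual_apply_eq (B v), hB v, hB v, dual_apply_eq (B (1, 0)), dual_apply_eq (B (0, 1)),
    hB (0, 1) (1, 0)]
  ring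

theorem apply_self_mul_apply_self_sub_sq (hB : ∀ v w, B v w = B w v) (v w : ℝ × ℝ) :
    B v v * B w w - B v w ^ 2 = gramDet B * (v.1 * w.2 - v.2 * w.1) ^ 2 := by
  rw [bilin_apply_eq hB v v, bilin_apply_eq hB v w, bilin_apply_eq hB w w, gramDet]
  ring

theorem gramDet_pos (hB : ∀ v w, B v w = B w v) (hpos : ∀ v ≠ 0, 0 < B v v) : 0 < gramDet B := by
  have hE : 0 < B (1, 0) (1, 0) := hpos _ (by simp)
  have hv : 0 < B (-B (1, 0) (0, 1), B (1, 0) (1, 0)) (-B (1, 0) (0, 1), B (1, 0) (1, 0)) :=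
    hpos _ fun h ↦ hE.ne' (congrArg Prod.snd h)
  refine pos_of_mul_pos_right (a := B (1, 0) (1, 0)) (lt_of_lt_of_eq hv ?_) hE.le
  rw [bilin_apply_eq hB, gramDet]
  ring

theorem apply_rightAngle_self (v : ℝ × ℝ) : B v (rightAngle B v) = 0 := by
  rw [dual_apply_eq (B v), rightAngle]
  simp only [Prod.smul_mk, smul_eq_mul]
  ring

theorem apply_rightAngle_rightAngle (hB : ∀ v w, B v w = B w v) (hdet : 0 < gramDet B)
    (v : ℝ × ℝ) : B (rightAngle B v) (rightAngle B v) = B v v := by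
  have hsqrt : (√(gramDet B))⁻¹ ^ 2 * gramDet B = 1 := by
    rw [inv_pow, Real.sq_sqrt hdet.le, inv_mul_cancel₀ hdet.ne']
  have hexp : B (rightAngle B v) (rightAngle B v) =
      (√(gramDet B))⁻¹ ^ 2 * gramDet B * B v v := by
    rw [bilin_apply_eq hB (rightAngle B v), bilin_apply_eq hB v v, rightAngle,
      bilin_apply_eq hB v (0, 1), bilin_apply_eq hB v (1, 0), gramDet]
    simp only [Prod.smul_mk, smul_eq_mul]
    ring
  rw [hexp, hsqrt, one_mul]

theorem eq_zero_of_apply_rightAngle_eq_zero {A : ℝ × ℝ →L[ℝ] ℝ} {v : ℝ × ℝ}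
    (hdet : 0 < gramDet B) (hv : B v v ≠ 0) (h₁ : A v = 0) (h₂ : A (rightAngle B v) = 0) :
    A = 0 := by
  rw [rightAngle, map_smul, smul_eq_mul,
    mul_eq_zero_iff_left (inv_ne_zero (Real.sqrt_pos.2 hdet).ne'), dual_apply_eq A] at h₂
  rw [dual_apply_eq A] at h₁
  have hBv := dual_apply_eq (B v) v
  have hx : B v v * A (1, 0) = 0 := by
    linear_combination A (1, 0) * hBv + B v (1, 0) * h₁ - v.2 * h₂
  have hy : B v v * A (0, 1) = 0 := by
    linear_combination A (0, 1) * hBv + B v (0, 1) * h₁ + v.1 * h₂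
  ext
  · simpa using (mul_eq_zero.1 hx).resolve_left hv
  · simpa using (mul_eq_zero.1 hy).resolve_left hv

variable {g : ℝ × ℝ → ℝ × ℝ →L[ℝ] ℝ × ℝ →L[ℝ] ℝ} {γ X : ℝ → ℝ × ℝ}

theorem IsBandMetric.gramDet_pos (hg : IsBandMetric g) {p : ℝ × ℝ} (hp : p ∈ strip) :
    0 < gramDet (g p) :=
  BandWidth.gramDet_pos (hg.symm p) (hg.pos p hp)

theorem continuousOn_rightAngle (hg : IsBandMetric g) (hγ : ContinuousOn γ (Icc 0 1))
    (hmem : ∀ t ∈ Icc (0 : ℝ) 1, γ t ∈ strip) (hX : ContinuousOn X (Icc 0 1)) :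
    ContinuousOn (fun t ↦ rightAngle (g (γ t)) (X t)) (Icc 0 1) := by
  have hgγ (v : ℝ × ℝ) : ContinuousOn (fun t ↦ g (γ t) v) (Icc 0 1) :=
    (hg.contDiff.continuous.comp_continuousOn hγ).clm_apply continuousOn_const
  have hB (v w : ℝ × ℝ) : ContinuousOn (fun t ↦ g (γ t) v w) (Icc 0 1) :=
    (hgγ v).clm_apply continuousOn_const
  have hP (w : ℝ × ℝ) : ContinuousOn (fun t ↦ g (γ t) (X t) w) (Icc 0 1) :=
    ((hg.contDiff.continuous.comp_continuousOn hγ).clm_apply hX).clm_apply continuousOn_const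
  have hdet : ContinuousOn (fun t ↦ gramDet (g (γ t))) (Icc 0 1) :=
    ((hB _ _).mul (hB _ _)).sub ((hB _ _).pow 2)
  exact (hdet.sqrt.inv₀ fun t ht ↦ (Real.sqrt_pos.2 (hg.gramDet_pos (hmem t ht))).ne').smul
    ((hP _).neg.prodMk (hP _))

theorem differentiableAt_rightAngle (hg : IsBandMetric g) {t : ℝ} (hγ : DifferentiableAt ℝ γ t)
    (hmem : γ t ∈ strip) (hX : DifferentiableAt ℝ X t) :
    DifferentiableAt ℝ (fun t ↦ rightAngle (g (γ t)) (X t)) t := by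
  have hgγ : DifferentiableAt ℝ (fun t ↦ g (γ t)) t := (HasFDerivAt.comp_hasDerivAt (l := g) t
    (hg.differentiable (γ t)).hasFDerivAt hγ.hasDerivAt).differentiableAt
  have hB (v w : ℝ × ℝ) : DifferentiableAt ℝ (fun t ↦ g (γ t) v w) t :=
    (hgγ.clm_apply (differentiableAt_const v)).clm_apply (differentiableAt_const w)
  have hP (w : ℝ × ℝ) : DifferentiableAt ℝ (fun t ↦ g (γ t) (X t) w) t :=
    (hgγ.clm_apply hX).clm_apply (differentiableAt_const w)
  have hdet : DifferentiableAt ℝ (fun t ↦ gramDet (g (γ t))) t :=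
    ((hB _ _).mul (hB _ _)).sub ((hB _ _).pow 2)
  have hpos := hg.gramDet_pos hmem
  exact ((hdet.sqrt hpos.ne').inv (Real.sqrt_pos.2 hpos).ne').smul ((hP _).neg.prodMk (hP _))

theorem IsParallel.rightAngle (hg : IsBandMetric g) (hγ : Differentiable ℝ γ)
    (hmem : ∀ t ∈ Icc (0 : ℝ) 1, γ t ∈ strip) (hX : IsParallel g γ X)
    (hX0 : ∀ t ∈ Ioo (0 : ℝ) 1, X t ≠ 0) :
    IsParallel g γ fun t ↦ rightAngle (g (γ t)) (X t) := by
  refine ⟨continuousOn_rightAngle hg hγ.continuous.continuousOn hmem hX.continuousOn,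
    fun t ht ↦ ?_⟩
  let N (t : ℝ) : ℝ × ℝ := BandWidth.rightAngle (g (γ t)) (X t)
  have hmemt := hmem t (Ioo_subset_Icc_self ht)
  have hinv := hg.isInvertible hmemt
  have hXt := hX.hasDerivAt t ht
  have hN : HasDerivAt N (deriv N t) t :=
    (differentiableAt_rightAngle hg (hγ t) hmemt hXt.differentiableAt).hasDerivAt
  have hmetric {Z : ℝ → ℝ × ℝ} {Z' : ℝ × ℝ} (hZ : HasDerivAt Z Z' t) :=
    hasDerivAt_metric_apply hg.differentiable hg.symm hinv (hγ t).hasDerivAt hZ hN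
  have hnormal : g (γ t) (X t) (deriv N t + christoffel g (γ t) (deriv γ t) (N t)) = 0 := by
    have hconst : HasDerivAt (fun s ↦ g (γ s) (X s) (N s)) 0 t :=
      (hasDerivAt_const t (0 : ℝ)).congr_of_eventuallyEq
        (.of_forall fun s ↦ apply_rightAngle_self (X s))
    simpa using (hmetric hXt).unique hconst
  have htangent : g (γ t) (N t) (deriv N t + christoffel g (γ t) (deriv γ t) (N t)) = 0 := by
    have hlen : HasDerivAt (fun s ↦ g (γ s) (N s) (N s)) 0 t := by
      refine HasDerivAt.congr_of_eventuallyEq ?_ (f := fun s ↦ g (γ s) (X s) (X s)) ?_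
      · simpa using hasDerivAt_metric_apply hg.differentiable hg.symm hinv (hγ t).hasDerivAt hXt hXt
      · filter_upwards [Icc_mem_nhds ht.1 ht.2] with s hs using
          apply_rightAngle_rightAngle (hg.symm _) (hg.gramDet_pos (hmem s hs)) _
    have huniq := (hmetric hN).unique hlen
    rw [hg.symm _ _ (N t)] at huniq
    linarith
  rw [hg.symm] at hnormal htangent
  have hzero := hg.eq_zero_of_apply_eq_zero hmemt <| eq_zero_of_apply_rightAngle_eq_zero
    (hg.gramDet_pos hmemt) (hg.pos _ hmemt _ (hX0 t ht)).ne' hnormal htangent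
  exact eq_neg_of_add_eq_zero_left hzero ▸ hN

end NormalFields

section AdmissibleVariations

theorem exists_mul_le_of_deriv_ne_zero {f : ℝ → ℝ} (hf : Differentiable ℝ f) (h0 : f 0 = 0)
    (hd : deriv f 0 ≠ 0) (hpos : ∀ t ∈ Ioc (0 : ℝ) 1, 0 < f t) :
    ∃ c > 0, ∀ t ∈ Icc (0 : ℝ) 1, c * t ≤ f t := by
  have hcont : Continuous (dslope f 0) := continuousOn_univ.1 <|
    (continuousOn_dslope univ_mem).2 ⟨hf.continuous.continuousOn, hf 0⟩
  have hslope : ∀ t ∈ Ioc (0 : ℝ) 1, 0 < dslope f 0 t := fun t ht ↦ by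
    rw [dslope_of_ne _ ht.1.ne', slope_def_field, h0, sub_zero, sub_zero]
    exact div_pos (hpos t ht) ht.1
  have hnonneg : 0 ≤ dslope f 0 0 := le_on_closure (fun t ht ↦ (hslope t ht).le)
    continuousOn_const hcont.continuousOn (by simp [closure_Ioc])
  obtain ⟨s, hs, hmin⟩ := isCompact_Icc.exists_isMinOn (nonempty_Icc.2 zero_le_one)
    (hcont.continuousOn (s := Icc (0 : ℝ) 1))
  refine ⟨dslope f 0 s, ?_, fun t ht ↦ ?_⟩
  · rcases hs.1.eq_or_lt with rfl | hs0
    · exact hnonneg.lt_of_ne' (by rwa [dslope_same])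
    · exact hslope s ⟨hs0, hs.2⟩
  · have hle : dslope f 0 s * t ≤ dslope f 0 t * t := mul_le_mul_of_nonneg_right (hmin ht) ht.1
    have heq := sub_smul_dslope f 0 t
    simp only [sub_zero, smul_eq_mul, h0] at heq
    linarith

theorem IsSobolevPath.exists_norm_sub_le {V : Type*} [NormedAddCommGroup V] [NormedSpace ℝ V]
    {η ζ : ℝ → V} (h : IsSobolevPath η ζ) (hζ : ContinuousOn ζ (Icc 0 1)) :
    ∃ C, ∀ s ∈ Icc (0 : ℝ) 1, ∀ t ∈ Icc (0 : ℝ) 1, ‖η t - η s‖ ≤ C * |t - s| := by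
  obtain ⟨C, hC⟩ := isCompact_Icc.exists_bound_of_continuousOn hζ
  refine ⟨C, fun s hs t ht ↦ ?_⟩
  rw [← h.add_integral_eq hs ht, add_sub_cancel_left]
  exact intervalIntegral.norm_integral_le_of_norm_le_const fun r hr ↦
    hC r (uIcc_subset_Icc hs ht (uIoc_subset_uIcc hr))

variable {g : ℝ × ℝ → ℝ × ℝ →L[ℝ] ℝ × ℝ →L[ℝ] ℝ} {γ η ζ : ℝ → ℝ × ℝ}
variable (hg : IsBandMetric g) (hγ : ContDiff ℝ 1 γ) (h : IsMinimizer g γ (deriv γ))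
include hg hγ h

theorem IsMinimizer.deriv_snd_ne_zero {t : ℝ} (ht : t ∈ Icc (0 : ℝ) 1)
    (hmom : g (γ t) (deriv γ t) (1, 0) = 0) : (deriv γ t).2 ≠ 0 := fun hzero ↦ by
  have hspeed := h.metric_deriv_eq_energy hg hγ ht
  rw [dual_apply_eq (g (γ t) (deriv γ t)), hmom, hzero] at hspeed
  linarith [h.energy_pos hg]

theorem IsMinimizer.exists_mul_le_one_add_snd :
    ∃ c > 0, ∀ t ∈ Icc (0 : ℝ) 1, c * t ≤ 1 + (γ t).2 := by
  have hderiv : ∀ t, HasDerivAt (fun s ↦ 1 + (γ s).2) (deriv γ t).2 t := fun t ↦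
    (hγ.differentiable one_ne_zero t).hasDerivAt.snd.const_add 1
  refine exists_mul_le_of_deriv_ne_zero (fun t ↦ (hderiv t).differentiableAt)
    (by simp [h.snd_zero]) ?_ fun t ht ↦ ?_
  · rw [(hderiv 0).deriv]
    exact h.deriv_snd_ne_zero hg hγ (by simp) (h.momentum_boundary hg hγ).1
  · rcases ht.2.eq_or_lt with rfl | ht1
    · norm_num [h.snd_one]
    · linarith [(h.snd_mem_Ioo hg ⟨ht.1, ht1⟩).1]

theorem IsMinimizer.exists_mul_le_one_sub_snd :
    ∃ c > 0, ∀ t ∈ Icc (0 : ℝ) 1, c * (1 - t) ≤ 1 - (γ t).2 := by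
  have hderiv : ∀ t, HasDerivAt (fun s ↦ 1 - (γ (1 - s)).2) (deriv γ (1 - t)).2 t := fun t ↦ by
    have hsnd : HasDerivAt (fun s ↦ (γ s).2) (deriv γ (1 - t)).2 (1 - t) :=
      (hγ.differentiable one_ne_zero (1 - t)).hasDerivAt.snd
    simpa using (hsnd.scomp t ((hasDerivAt_id t).const_sub 1)).const_sub 1
  obtain ⟨c, hc, hle⟩ : ∃ c > 0, ∀ t ∈ Icc (0 : ℝ) 1, c * t ≤ 1 - (γ (1 - t)).2 := by
    refine exists_mul_le_of_deriv_ne_zero (fun t ↦ (hderiv t).differentiableAt)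
      (by simp [h.snd_one]) ?_ fun t ht ↦ ?_
    · rw [(hderiv 0).deriv, sub_zero]
      exact h.deriv_snd_ne_zero hg hγ (by simp) (h.momentum_boundary hg hγ).2
    · rcases ht.2.eq_or_lt with rfl | ht1
      · norm_num [h.snd_zero]
      · linarith [(h.snd_mem_Ioo hg (t := 1 - t) ⟨by linarith, by linarith [ht.1]⟩).2]
  refine ⟨c, hc, fun t ht ↦ ?_⟩
  simpa using hle (1 - t) ⟨by linarith [ht.2], by linarith [ht.1]⟩

theorem IsMinimizer.eventually_add_smul_mem_strip (hη : IsSobolevPath η ζ)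
    (hζ : ContinuousOn ζ (Icc 0 1)) (h0 : (η 0).2 = 0) (h1 : (η 1).2 = 0) :
    ∀ᶠ ε in 𝓝 (0 : ℝ), ∀ t ∈ Icc (0 : ℝ) 1, γ t + ε • η t ∈ strip := by
  obtain ⟨C, hC⟩ := hη.exists_norm_sub_le hζ
  obtain ⟨c₁, hc₁, hlow⟩ := h.exists_mul_le_one_add_snd hg hγ
  obtain ⟨c₂, hc₂, hupp⟩ := h.exists_mul_le_one_sub_snd hg hγ
  have hC0 : 0 ≤ C := by simpa using (norm_nonneg _).trans (hC 0 (by simp) 1 (by simp))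
  refine BandWidth.eventually_add_smul_mem_strip h.mem_strip (C₁ := C / c₁) (C₂ := C / c₂)
    (fun t ht ↦ ?_) fun t ht ↦ ?_
  · calc |(η t).2| = |(η t - η 0).2| := by simp [h0]
      _ ≤ C * |t - 0| := (norm_snd_le _).trans (hC 0 (by simp) t ht)
      _ = C / c₁ * (c₁ * t) := by rw [sub_zero, abs_of_nonneg ht.1]; field_simp
      _ ≤ C / c₁ * (1 + (γ t).2) := by gcongr; exact hlow t ht
  · calc |(η t).2| = |(η t - η 1).2| := by simp [h1]
      _ ≤ C * |t - 1| := (norm_snd_le _).trans (hC 1 (by simp) t ht)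
      _ = C / c₂ * (c₂ * (1 - t)) := by
        rw [abs_sub_comm, abs_of_nonneg (sub_nonneg.2 ht.2)]; field_simp
      _ ≤ C / c₂ * (1 - (γ t).2) := by gcongr; exact hupp t ht

end AdmissibleVariations

section SecondVariation

set_option maxSynthPendingDepth 3

theorem nonneg_of_isLocalMin {f f' : ℝ → ℝ} {x d : ℝ} (hmin : IsLocalMin f x)
    (hf : ∀ y, HasDerivAt f (f' y) y) (hf' : HasDerivAt f' d x) : 0 ≤ d := by
  obtain rfl : deriv f = f' := funext fun y ↦ (hf y).deriv
  by_contra! hd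
  have hmax : IsLocalMax f x := isLocalMax_of_deriv_deriv_neg (by rwa [hf'.deriv])
    hmin.deriv_eq_zero (hf x).continuousAt
  have hconst : f =ᶠ[𝓝 x] fun _ ↦ f x := by
    filter_upwards [hmin, hmax] with y h₁ h₂ using le_antisymm h₂ h₁
  have hzero := hconst.deriv.deriv.eq_of_nhds
  rw [hf'.deriv] at hzero
  simp [hzero] at hd

theorem hasDerivAt_integral_unitVolume {f f' : ℝ → ℝ → ℝ}
    (hf : ∀ ε, ContinuousOn (f ε) (Icc 0 1))
    (hf' : ContinuousOn f'.uncurry (Icc (-1) 1 ×ˢ Icc 0 1))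
    (hderiv : ∀ ε t, HasDerivAt (f · t) (f' ε t) ε) :
    HasDerivAt (fun ε ↦ ∫ t, f ε t ∂unitVolume) (∫ t, f' 0 t ∂unitVolume) 0 := by
  obtain ⟨C, hC⟩ := (isCompact_Icc.prod isCompact_Icc).exists_bound_of_continuousOn hf'
  have hf'0 : ContinuousOn (f' 0) (Icc 0 1) :=
    hf'.comp (by fun_prop : ContinuousOn (fun t : ℝ ↦ ((0 : ℝ), t)) _) fun t ht ↦ ⟨by simp, ht⟩
  exact (hasDerivAt_integral_of_dominated_loc_of_deriv_le
    (Icc_mem_nhds (by norm_num) one_pos)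
    (.of_forall fun ε ↦ (integrable_of_continuousOn (hf ε)).aestronglyMeasurable)
    (integrable_of_continuousOn (hf 0))
    (integrable_of_continuousOn hf'0).aestronglyMeasurable
    (ae_unitVolume_of_forall fun t ht ε hε ↦ hC (ε, t) ⟨hε, ht⟩) (integrable_const C)
    (.of_forall fun t ε _ ↦ hderiv ε t)).2

variable {V : Type*} [NormedAddCommGroup V] [NormedSpace ℝ V]

/-- The integrand of the second variation of the energy of a path through `p` with velocity `v`,
along a field with value `η` and derivative `ζ`. -/
noncomputable def secondVariation (g : V → V →L[ℝ] V →L[ℝ] ℝ) (p v η ζ : V) : ℝ :=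
  fderiv ℝ (fderiv ℝ g) p η η v v + 2 * (fderiv ℝ g p η ζ v + fderiv ℝ g p η v ζ) + 2 * g p ζ ζ

variable {g : V → V →L[ℝ] V →L[ℝ] ℝ}

theorem hasDerivAt_firstVariation (hg : ContDiff ℝ 2 g) (p v η ζ : V) (ε : ℝ) :
    HasDerivAt (fun ε : ℝ ↦ firstVariation g (p + ε • η) (v + ε • ζ) η ζ)
      (secondVariation g (p + ε • η) (v + ε • ζ) η ζ) ε := by
  have hdg : Differentiable ℝ (fderiv ℝ g) :=
    (hg.fderiv_right (m := 1) le_rfl).differentiable one_ne_zero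
  have hdgη : ∀ q, HasFDerivAt (fun q ↦ fderiv ℝ g q η) ((fderiv ℝ (fderiv ℝ g) q).flip η) q :=
    fun q ↦ by simpa using (hdg q).hasFDerivAt.clm_apply (hasFDerivAt_const η q)
  have hg' := hg.differentiable two_ne_zero
  have h := ((hasDerivAt_bilin_apply (fun q ↦ (hdgη q).differentiableAt) p η v ζ v ζ ε).add
    (hasDerivAt_bilin_apply hg' p η ζ 0 v ζ ε)).add (hasDerivAt_bilin_apply hg' p η v ζ ζ 0 ε)
  simp only [smul_zero, add_zero, map_zero, zero_apply, (hdgη _).fderiv,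
    ContinuousLinearMap.flip_apply] at h
  refine h.congr_deriv ?_
  rw [secondVariation]
  ring

theorem continuousOn_firstVariation {X : Type*} [TopologicalSpace X] {s : Set X} {p v η ζ : X → V}
    (hg : ContDiff ℝ 1 g) (hp : ContinuousOn p s) (hv : ContinuousOn v s)
    (hη : ContinuousOn η s) (hζ : ContinuousOn ζ s) :
    ContinuousOn (fun x ↦ firstVariation g (p x) (v x) (η x) (ζ x)) s := by
  have hgp := hg.continuous.comp_continuousOn hp
  have hdg := ((hg.continuous_fderiv one_ne_zero).comp_continuousOn hp).clm_apply hη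
  exact (((hdg.clm_apply hv).clm_apply hv).add ((hgp.clm_apply hζ).clm_apply hv)).add
    ((hgp.clm_apply hv).clm_apply hζ)

theorem continuousOn_secondVariation {X : Type*} [TopologicalSpace X] {s : Set X} {p v η ζ : X → V}
    (hg : ContDiff ℝ 2 g) (hp : ContinuousOn p s) (hv : ContinuousOn v s)
    (hη : ContinuousOn η s) (hζ : ContinuousOn ζ s) :
    ContinuousOn (fun x ↦ secondVariation g (p x) (v x) (η x) (ζ x)) s := by
  have hgp := hg.continuous.comp_continuousOn hp
  have hdg := ((hg.continuous_fderiv two_ne_zero).comp_continuousOn hp).clm_apply hη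
  have hddg := ((((hg.fderiv_right (m := 1) le_rfl).continuous_fderiv one_ne_zero).comp_continuousOn
    hp).clm_apply hη).clm_apply hη
  exact (((hddg.clm_apply hv).clm_apply hv).add (continuousOn_const.mul
    (((hdg.clm_apply hζ).clm_apply hv).add ((hdg.clm_apply hv).clm_apply hζ)))).add
    (continuousOn_const.mul ((hgp.clm_apply hζ).clm_apply hζ))

variable {γ v η ζ : ℝ → V}

theorem hasDerivAt_energy_add_smul (hg : ContDiff ℝ 1 g) (hγ : IsSobolevPath γ v)
    (hη : IsSobolevPath η ζ) (ε : ℝ) :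
    HasDerivAt (fun ε : ℝ ↦ energy g (fun t ↦ γ t + ε • η t) (fun t ↦ v t + ε • ζ t))
      (∫ t, firstVariation g (γ t + ε • η t) (v t + ε • ζ t) (η t) (ζ t) ∂unitVolume) ε := by
  have h := (sub_self ε).symm ▸ hasDerivAt_energy hg (hγ.add_smul hη ε) hη
  simpa [add_assoc, ← add_smul] using h.comp_sub_const ε ε

theorem hasDerivAt_integral_firstVariation (hg : ContDiff ℝ 2 g) (hγ : ContinuousOn γ (Icc 0 1))
    (hv : ContinuousOn v (Icc 0 1)) (hη : ContinuousOn η (Icc 0 1))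
    (hζ : ContinuousOn ζ (Icc 0 1)) :
    HasDerivAt (fun ε : ℝ ↦
      ∫ t, firstVariation g (γ t + ε • η t) (v t + ε • ζ t) (η t) (ζ t) ∂unitVolume)
      (∫ t, secondVariation g (γ t) (v t) (η t) (ζ t) ∂unitVolume) 0 := by
  have hsnd {f : ℝ → V} (hf : ContinuousOn f (Icc 0 1)) :
      ContinuousOn (fun x : ℝ × ℝ ↦ f x.2) (Icc (-1) 1 ×ˢ Icc 0 1) :=
    hf.comp continuousOn_snd fun _ hx ↦ hx.2
  have h := hasDerivAt_integral_unitVolume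
    (f := fun ε t ↦ firstVariation g (γ t + ε • η t) (v t + ε • ζ t) (η t) (ζ t))
    (f' := fun ε t ↦ secondVariation g (γ t + ε • η t) (v t + ε • ζ t) (η t) (ζ t))
    (fun ε ↦ continuousOn_firstVariation (hg.of_le one_le_two) (hγ.add (hη.const_smul ε))
      (hv.add (hζ.const_smul ε)) hη hζ)
    (continuousOn_secondVariation hg ((hsnd hγ).add (continuousOn_fst.smul (hsnd hη)))
      ((hsnd hv).add (continuousOn_fst.smul (hsnd hζ))) (hsnd hη) (hsnd hζ))
    fun ε t ↦ hasDerivAt_firstVariation hg _ _ _ _ ε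
  simpa using h

theorem IsMinimizer.integral_secondVariation_nonneg {g : ℝ × ℝ → ℝ × ℝ →L[ℝ] ℝ × ℝ →L[ℝ] ℝ}
    {γ η ζ : ℝ → ℝ × ℝ} (hg : IsBandMetric g) (hγ : ContDiff ℝ 1 γ)
    (h : IsMinimizer g γ (deriv γ)) (hη : IsSobolevPath η ζ) (hζ : ContinuousOn ζ (Icc 0 1))
    (h0 : (η 0).2 = 0) (h1 : (η 1).2 = 0) :
    0 ≤ ∫ t, secondVariation g (γ t) (deriv γ t) (η t) (ζ t) ∂unitVolume :=
  nonneg_of_isLocalMin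
    (h.isLocalMin_energy hη h0 h1 (h.eventually_add_smul_mem_strip hg hγ hη hζ h0 h1))
    (hasDerivAt_energy_add_smul (hg.contDiff.of_le one_le_two) h.toIsSobolevPath hη)
    (hasDerivAt_integral_firstVariation hg.contDiff hγ.continuous.continuousOn
      (hγ.continuous_deriv le_rfl).continuousOn hη.continuousOn hζ)

end SecondVariation

section Curvature

set_option maxSynthPendingDepth 3

variable {V : Type*} [NormedAddCommGroup V] [NormedSpace ℝ V]

/-- The curvature `R(v, w, w, v)` of a metric `g`: the sectional curvature of the plane spanned by
`v` and `w`, multiplied by the squared area of the parallelogram they span. -/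
noncomputable def curvatureForm (g : V → V →L[ℝ] V →L[ℝ] ℝ) (p v w : V) : ℝ :=
  fderiv ℝ (fderiv ℝ g) p v w w v -
    (fderiv ℝ (fderiv ℝ g) p w w v v + fderiv ℝ (fderiv ℝ g) p v v w w) / 2 +
    g p (christoffel g p v w) (christoffel g p v w) -
    g p (christoffel g p v v) (christoffel g p w w)

variable {g : V → V →L[ℝ] V →L[ℝ] ℝ}

theorem hasDerivAt_fderiv_apply (hg : ContDiff ℝ 2 g) {γ X Y Z : ℝ → V} {T X' Y' Z' : V} {t : ℝ}
    (hγ : HasDerivAt γ T t) (hX : HasDerivAt X X' t) (hY : HasDerivAt Y Y' t)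
    (hZ : HasDerivAt Z Z' t) :
    HasDerivAt (fun s ↦ fderiv ℝ g (γ s) (X s) (Y s) (Z s))
      (fderiv ℝ (fderiv ℝ g) (γ t) T (X t) (Y t) (Z t) + fderiv ℝ g (γ t) X' (Y t) (Z t) +
        fderiv ℝ g (γ t) (X t) Y' (Z t) + fderiv ℝ g (γ t) (X t) (Y t) Z') t := by
  have hdg : HasFDerivAt (fderiv ℝ g) (fderiv ℝ (fderiv ℝ g) (γ t)) (γ t) :=
    ((hg.fderiv_right (m := 1) le_rfl).differentiable one_ne_zero _).hasFDerivAt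
  have hdgγ : HasDerivAt (fun s ↦ fderiv ℝ g (γ s)) (fderiv ℝ (fderiv ℝ g) (γ t) T) t :=
    HasFDerivAt.comp_hasDerivAt (l := fderiv ℝ g) t hdg hγ
  simpa [add_assoc] using ((hdgγ.clm_apply hX).clm_apply hY).clm_apply hZ

theorem hasDerivAt_two_mul_christoffelLower (hg : ContDiff ℝ 2 g) {γ X Y : ℝ → V} {T X' Y' : V}
    {t : ℝ} (hγ : HasDerivAt γ T t) (hX : HasDerivAt X X' t) (hY : HasDerivAt Y Y' t) :
    HasDerivAt (fun s ↦ 2 * christoffelLower g (γ s) (X s) (X s) (Y s))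
      (2 * fderiv ℝ (fderiv ℝ g) (γ t) T (X t) (X t) (Y t) -
        fderiv ℝ (fderiv ℝ g) (γ t) T (Y t) (X t) (X t) +
        2 * fderiv ℝ g (γ t) X' (X t) (Y t) + 2 * fderiv ℝ g (γ t) (X t) X' (Y t) -
        fderiv ℝ g (γ t) (Y t) X' (X t) - fderiv ℝ g (γ t) (Y t) (X t) X' +
        2 * christoffelLower g (γ t) (X t) (X t) Y') t := by
  have hderiv := ((hasDerivAt_fderiv_apply hg hγ hX hX hY).const_mul 2).sub
    (hasDerivAt_fderiv_apply hg hγ hY hX hX)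
  refine (hderiv.congr_deriv ?_).congr_of_eventuallyEq (.of_forall fun s ↦ ?_)
  · rw [christoffelLower_apply]
    ring
  · simp only [christoffelLower_apply, Pi.sub_apply]
    ring

theorem secondVariation_smul (hg : Differentiable ℝ g) (hsymm : ∀ p v w, g p v w = g p w v)
    {p : V} (hinv : (g p).IsInvertible) (T N : V) (ψ ψ' : ℝ) :
    secondVariation g p T (ψ • N) (ψ' • N - ψ • christoffel g p T N) =
      ψ ^ 2 * (fderiv ℝ (fderiv ℝ g) p N N T T - 4 * fderiv ℝ g p N (christoffel g p T N) T +
        2 * g p (christoffel g p T N) (christoffel g p T N)) +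
      4 * ψ * ψ' * christoffelLower g p N N T + 2 * ψ' ^ 2 * g p N N := by
  have hNC : g p N (christoffel g p T N) = fderiv ℝ g p T N N / 2 := by
    rw [hsymm, apply_christoffel hinv, christoffelLower_apply, fderiv_apply_comm hg hsymm p N T N]
    ring
  simp only [secondVariation, christoffelLower_apply, map_smul, map_sub, smul_apply, sub_apply,
    smul_eq_mul]
  rw [hsymm p (christoffel g p T N) N, hNC, fderiv_apply_comm hg hsymm p N T N,
    fderiv_apply_comm hg hsymm p N T (christoffel g p T N)]
  ring

/- Integrating by parts the terms in `ψ ψ'` turns the second variation along `ψ N` into the index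
form `2 ∫ (ψ'² g(N, N) - ψ² R(T, N, N, T))`. -/
theorem hasDerivAt_sq_mul_christoffelLower (hg : ContDiff ℝ 2 g)
    (hsymm : ∀ p v w, g p v w = g p w v) {γ T N : ℝ → V} {ψ : ℝ → ℝ} {ψ' t : ℝ}
    (hinv : (g (γ t)).IsInvertible) (hγ : HasDerivAt γ (T t) t)
    (hT : HasDerivAt T (-christoffel g (γ t) (T t) (T t)) t)
    (hN : HasDerivAt N (-christoffel g (γ t) (T t) (N t)) t) (hψ : HasDerivAt ψ ψ' t) :
    HasDerivAt (fun s ↦ ψ s ^ 2 * (2 * christoffelLower g (γ s) (N s) (N s) (T s)))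
      (secondVariation g (γ t) (T t) (ψ t • N t)
          (ψ' • N t - ψ t • christoffel g (γ t) (T t) (N t)) -
        2 * ψ' ^ 2 * g (γ t) (N t) (N t) +
        2 * ψ t ^ 2 * curvatureForm g (γ t) (T t) (N t)) t := by
  have hg' := hg.differentiable two_ne_zero
  refine ((hψ.pow 2).mul (hasDerivAt_two_mul_christoffelLower hg hγ hN hT)).congr_deriv ?_
  rw [secondVariation_smul hg' hsymm hinv, curvatureForm, hsymm _ (christoffel g _ (T t) (T t)),
    apply_christoffel hinv, apply_christoffel hinv]
  simp only [map_neg, neg_apply, christoffelLower_apply, Pi.pow_apply]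
  rw [fderiv_apply_comm hg' hsymm _ (T t) (christoffel g _ (T t) (N t)),
    fderiv_apply_comm hg' hsymm _ (N t) (christoffel g _ (T t) (N t)),
    fderiv_apply_comm hg' hsymm _ (christoffel g _ (T t) (N t)) (T t)]
  ring

end Curvature

section BonnetMyers

theorem integral_index_sin_add_le {m c : ℝ} (hc : Real.pi ^ 2 * m ≤ c) (δ : ℝ) :
    ∫ t in (0 : ℝ)..1, (m * deriv (fun s ↦ Real.sin (Real.pi * s) + δ) t ^ 2 -
      c * (Real.sin (Real.pi * t) + δ) ^ 2) ≤
      -(m * (4 * Real.pi * δ + Real.pi ^ 2 * δ ^ 2)) := by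
  let primitive (t : ℝ) : ℝ := m * (Real.pi * (Real.sin (Real.pi * t) * Real.cos (Real.pi * t)) +
    2 * Real.pi * δ * Real.cos (Real.pi * t) - Real.pi ^ 2 * δ ^ 2 * t)
  have hlin (t : ℝ) : HasDerivAt (fun t ↦ Real.pi * t) Real.pi t := by
    simpa using (hasDerivAt_id t).const_mul Real.pi
  have hderiv (t : ℝ) : deriv (fun s ↦ Real.sin (Real.pi * s) + δ) t =
      Real.pi * Real.cos (Real.pi * t) := by
    rw [((hlin t).sin.add_const δ).deriv, mul_comm]
  have hprimitive (t : ℝ) : HasDerivAt primitive (m * (Real.pi * Real.cos (Real.pi * t)) ^ 2 -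
      Real.pi ^ 2 * m * (Real.sin (Real.pi * t) + δ) ^ 2) t := by
    refine ((((((hlin t).sin.mul (hlin t).cos).const_mul Real.pi).add
      ((hlin t).cos.const_mul (2 * Real.pi * δ))).sub
      ((hasDerivAt_id t).const_mul (Real.pi ^ 2 * δ ^ 2))).const_mul m).congr_deriv ?_
    ring
  simp only [hderiv]
  calc ∫ t in (0 : ℝ)..1, (m * (Real.pi * Real.cos (Real.pi * t)) ^ 2 -
        c * (Real.sin (Real.pi * t) + δ) ^ 2)
      ≤ ∫ t in (0 : ℝ)..1, (m * (Real.pi * Real.cos (Real.pi * t)) ^ 2 -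
          Real.pi ^ 2 * m * (Real.sin (Real.pi * t) + δ) ^ 2) := by
        refine intervalIntegral.integral_mono_on zero_le_one
          (by apply Continuous.intervalIntegrable; fun_prop)
          (by apply Continuous.intervalIntegrable; fun_prop) fun t _ ↦ ?_
        gcongr
    _ = primitive 1 - primitive 0 :=
        intervalIntegral.integral_eq_sub_of_hasDerivAt (fun t _ ↦ hprimitive t)
          (by apply Continuous.intervalIntegrable; fun_prop)
    _ = -(m * (4 * Real.pi * δ + Real.pi ^ 2 * δ ^ 2)) := by
        simp only [primitive, mul_one, mul_zero, Real.sin_pi, Real.cos_pi, Real.sin_zero,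
          Real.cos_zero]
        ring

/- At `c = π² m` the index form vanishes on `sin (π t)`; adding a small constant `δ` makes it
negative to first order in `δ`, while the boundary terms are of order `δ²`. -/
theorem lt_pi_sq_mul_of_forall_index_nonneg {m c b₀ b₁ : ℝ} (hm : 0 < m)
    (h : ∀ ψ : ℝ → ℝ, ContDiff ℝ 1 ψ →
      0 ≤ ψ 1 ^ 2 * b₁ - ψ 0 ^ 2 * b₀ + 2 * ∫ t in (0 : ℝ)..1, (m * deriv ψ t ^ 2 - c * ψ t ^ 2)) :
    c < Real.pi ^ 2 * m := by
  by_contra! hc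
  have hindex (δ : ℝ) :
      0 ≤ δ ^ 2 * (b₁ - b₀) - 2 * m * (4 * Real.pi * δ + Real.pi ^ 2 * δ ^ 2) := by
    have hsin := h (fun t ↦ Real.sin (Real.pi * t) + δ) (by fun_prop)
    simp only [mul_one, mul_zero, Real.sin_pi, Real.sin_zero, zero_add] at hsin
    linarith [integral_index_sin_add_le hc δ]
  let q := |b₁ - b₀|
  let δ := m / (1 + q)
  have hq : 0 < 1 + q := add_pos_of_pos_of_nonneg one_pos (abs_nonneg _)
  have hδ : 0 < δ := div_pos hm hq
  have hδq : δ * (b₁ - b₀) ≤ m :=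
    calc δ * (b₁ - b₀) ≤ δ * (1 + q) := by
          gcongr
          linarith [le_abs_self (b₁ - b₀)]
      _ = m := div_mul_cancel₀ m hq.ne'
  have hboundary : δ ^ 2 * (b₁ - b₀) ≤ m * δ := by nlinarith
  have hmδ : 0 < m * δ := by positivity
  nlinarith [hindex δ, Real.pi_gt_three, mul_pos hm (pow_pos (mul_pos Real.pi_pos hδ) 2)]

set_option maxSynthPendingDepth 3

theorem continuousOn_christoffelLower {V X : Type*} [NormedAddCommGroup V] [NormedSpace ℝ V]
    [TopologicalSpace X] {g : V → V →L[ℝ] V →L[ℝ] ℝ} {s : Set X} {p v w : X → V}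
    (hg : ContDiff ℝ 1 g) (hp : ContinuousOn p s) (hv : ContinuousOn v s)
    (hw : ContinuousOn w s) :
    ContinuousOn (fun x ↦ christoffelLower g (p x) (v x) (w x)) s := by
  have hdg : ContinuousOn (fun x ↦ fderiv ℝ g (p x)) s :=
    (hg.continuous_fderiv one_ne_zero).comp_continuousOn hp
  have hflip := ((ContinuousLinearMap.flipₗᵢ ℝ V V (V →L[ℝ] ℝ)).continuous.comp_continuousOn
    hdg).clm_apply hv
  have hflip' := ((ContinuousLinearMap.flipₗᵢ ℝ V V ℝ).continuous.comp_continuousOn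
    hflip).clm_apply hw
  exact ((((hdg.clm_apply hv).clm_apply hw).add ((hdg.clm_apply hw).clm_apply hv)).sub
    hflip').const_smul (1 / 2 : ℝ)

variable {g : ℝ × ℝ → ℝ × ℝ →L[ℝ] ℝ × ℝ →L[ℝ] ℝ} {γ : ℝ → ℝ × ℝ}

theorem IsBandMetric.continuousOn_christoffel (hg : IsBandMetric g)
    {X Y : ℝ → ℝ × ℝ} (hγ : ContinuousOn γ (Icc 0 1)) (hmem : ∀ t ∈ Icc (0 : ℝ) 1, γ t ∈ strip)
    (hX : ContinuousOn X (Icc 0 1)) (hY : ContinuousOn Y (Icc 0 1)) :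
    ContinuousOn (fun t ↦ christoffel g (γ t) (X t) (Y t)) (Icc 0 1) := by
  have hinv : ContinuousOn (fun t ↦ (g (γ t)).inverse) (Icc 0 1) := fun t ht ↦
    (hg.contDiffAt_inverse (hmem t ht)).continuousAt.comp_continuousWithinAt (hγ t ht)
  exact hinv.clm_apply
    (continuousOn_christoffelLower (hg.contDiff.of_le one_le_two) hγ hX hY)

variable {N : ℝ → ℝ × ℝ} {ψ : ℝ → ℝ} (hg : IsBandMetric g) (hγ : ContDiff ℝ 1 γ)
  (h : IsMinimizer g γ (deriv γ)) (hN : IsParallel g γ N) (hψ : ContDiff ℝ 1 ψ)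
include hg hγ h hN hψ

theorem IsMinimizer.continuousOn_covariantDeriv_smul :
    ContinuousOn (fun t ↦ deriv ψ t • N t - ψ t • christoffel g (γ t) (deriv γ t) (N t))
      (Icc 0 1) :=
  ((hψ.continuous_deriv le_rfl).continuousOn.smul hN.continuousOn).sub
    (hψ.continuous.continuousOn.smul (hg.continuousOn_christoffel h.continuousOn h.mem_strip
      (h.isParallel_deriv hg hγ).continuousOn hN.continuousOn))

theorem IsMinimizer.continuousOn_secondVariation_smul :
    ContinuousOn (fun t ↦ secondVariation g (γ t) (deriv γ t) (ψ t • N t)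
      (deriv ψ t • N t - ψ t • christoffel g (γ t) (deriv γ t) (N t))) (Icc 0 1) :=
  continuousOn_secondVariation hg.contDiff h.continuousOn (h.isParallel_deriv hg hγ).continuousOn
    (hψ.continuous.continuousOn.smul hN.continuousOn)
    (h.continuousOn_covariantDeriv_smul hg hγ hN hψ)

theorem IsMinimizer.integral_secondVariation_smul_nonneg (hN0 : (N 0).2 = 0)
    (hN1 : (N 1).2 = 0) :
    0 ≤ ∫ t in (0 : ℝ)..1, secondVariation g (γ t) (deriv γ t) (ψ t • N t)
      (deriv ψ t • N t - ψ t • christoffel g (γ t) (deriv γ t) (N t)) := by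
  have hζ := h.continuousOn_covariantDeriv_smul hg hγ hN hψ
  have hη : IsSobolevPath (fun t ↦ ψ t • N t)
      fun t ↦ deriv ψ t • N t - ψ t • christoffel g (γ t) (deriv γ t) (N t) :=
    .of_hasDerivAt (hψ.continuous.continuousOn.smul hN.continuousOn) hζ fun t ht ↦
      ((hψ.differentiable one_ne_zero t).hasDerivAt.smul (hN.hasDerivAt t ht)).congr_deriv
        (by module)
  rw [intervalIntegral_zero_one]
  exact h.integral_secondVariation_nonneg hg hγ hη hζ (by simp [hN0]) (by simp [hN1])

theorem IsMinimizer.index_nonneg {m c : ℝ}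
    (hNN : ∀ t ∈ Icc (0 : ℝ) 1, g (γ t) (N t) (N t) = m) (hN0 : (N 0).2 = 0) (hN1 : (N 1).2 = 0)
    (hc : ∀ t ∈ Ioo (0 : ℝ) 1, c ≤ curvatureForm g (γ t) (deriv γ t) (N t)) :
    0 ≤ ψ 1 ^ 2 * (2 * christoffelLower g (γ 1) (N 1) (N 1) (deriv γ 1)) -
      ψ 0 ^ 2 * (2 * christoffelLower g (γ 0) (N 0) (N 0) (deriv γ 0)) +
      2 * ∫ t in (0 : ℝ)..1, (m * deriv ψ t ^ 2 - c * ψ t ^ 2) := by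
  have hT := h.isParallel_deriv hg hγ
  let S (t : ℝ) : ℝ := secondVariation g (γ t) (deriv γ t) (ψ t • N t)
    (deriv ψ t • N t - ψ t • christoffel g (γ t) (deriv γ t) (N t))
  let I (t : ℝ) : ℝ := m * deriv ψ t ^ 2 - c * ψ t ^ 2
  have hS : ContinuousOn S (Icc 0 1) := h.continuousOn_secondVariation_smul hg hγ hN hψ
  have hI : Continuous I := (((hψ.continuous_deriv le_rfl).pow 2).const_mul m).sub
    ((hψ.continuous.pow 2).const_mul c)
  have hle : ∫ t in (0 : ℝ)..1, (S t - 2 * I t) ≤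
      ψ 1 ^ 2 * (2 * christoffelLower g (γ 1) (N 1) (N 1) (deriv γ 1)) -
      ψ 0 ^ 2 * (2 * christoffelLower g (γ 0) (N 0) (N 0) (deriv γ 0)) := by
    refine intervalIntegral.integral_le_sub_of_hasDeriv_right_of_le zero_le_one
      (g := fun t ↦ ψ t ^ 2 * (2 * christoffelLower g (γ t) (N t) (N t) (deriv γ t)))
      ?_ (fun t ht ↦ (hasDerivAt_sq_mul_christoffelLower hg.contDiff hg.symm
        (hg.isInvertible (h.mem_strip t (Ioo_subset_Icc_self ht)))
        (hγ.differentiable one_ne_zero t).hasDerivAt (hT.hasDerivAt t ht) (hN.hasDerivAt t ht)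
        (hψ.differentiable one_ne_zero t).hasDerivAt).hasDerivWithinAt)
      (hS.sub (continuous_const.mul hI).continuousOn).integrableOn_Icc fun t ht ↦ ?_
    · exact (hψ.continuous.pow 2).continuousOn.mul (continuousOn_const.mul
        ((continuousOn_christoffelLower (hg.contDiff.of_le one_le_two) h.continuousOn
          hN.continuousOn hN.continuousOn).clm_apply hT.continuousOn))
    · rw [hNN t (Ioo_subset_Icc_self ht)]
      have hcurv := mul_le_mul_of_nonneg_left (hc t ht) (sq_nonneg (ψ t))
      simp only [S, I]
      linarith
  rw [intervalIntegral.integral_sub (hS.mono (by simp)).intervalIntegrable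
    ((hI.const_mul 2).intervalIntegrable 0 1), intervalIntegral.integral_const_mul] at hle
  linarith [h.integral_secondVariation_smul_nonneg hg hγ hN hψ hN0 hN1]

end BonnetMyers

section Length

variable {g : ℝ × ℝ → ℝ × ℝ →L[ℝ] ℝ × ℝ →L[ℝ] ℝ} {κ : ℝ} (hg : IsBandMetric g)
  (hκ : ∀ p ∈ strip, ∀ v w,
    κ * (g p v v * g p w w - g p v w ^ 2) ≤ curvatureForm g p v w)
include hg hκ

theorem IsMinimizer.mul_energy_lt_pi_sq {γ : ℝ → ℝ × ℝ} (hγ : ContDiff ℝ 1 γ)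
    (h : IsMinimizer g γ (deriv γ)) : κ * energy g γ (deriv γ) < Real.pi ^ 2 := by
  let m := energy g γ (deriv γ)
  let N (t : ℝ) : ℝ × ℝ := rightAngle (g (γ t)) (deriv γ t)
  have hm : 0 < m := h.energy_pos hg
  have hTT : ∀ t ∈ Icc (0 : ℝ) 1, g (γ t) (deriv γ t) (deriv γ t) = m := fun t ht ↦
    h.metric_deriv_eq_energy hg hγ ht
  have hNN : ∀ t ∈ Icc (0 : ℝ) 1, g (γ t) (N t) (N t) = m := fun t ht ↦
    (apply_rightAngle_rightAngle (hg.symm _) (hg.gramDet_pos (h.mem_strip t ht)) _).trans (hTT t ht)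
  have hN : IsParallel g γ N :=
    .rightAngle hg (hγ.differentiable one_ne_zero) h.mem_strip (h.isParallel_deriv hg hγ)
      fun t ht h0 ↦ hm.ne (by simpa [h0] using hTT t (Ioo_subset_Icc_self ht))
  obtain ⟨hmom0, hmom1⟩ := h.momentum_boundary hg hγ
  have hcurv : ∀ t ∈ Ioo (0 : ℝ) 1, κ * m ^ 2 ≤ curvatureForm g (γ t) (deriv γ t) (N t) :=
    fun t ht ↦ by
      have ht' := Ioo_subset_Icc_self ht
      have hle := hκ (γ t) (h.mem_strip t ht') (deriv γ t) (N t)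
      rwa [hTT t ht', hNN t ht', apply_rightAngle_self, zero_pow two_ne_zero, sub_zero,
        ← sq] at hle
  have hlt : κ * m ^ 2 < Real.pi ^ 2 * m := lt_pi_sq_mul_of_forall_index_nonneg hm fun ψ hψ ↦
    h.index_nonneg hg hγ hN hψ hNN (by simp [N, rightAngle, hmom0]) (by simp [N, rightAngle, hmom1])
      hcurv
  exact lt_of_mul_lt_mul_right (by linarith : κ * m * m < Real.pi ^ 2 * m) hm.le

theorem IsBandMetric.exists_length_lt (hκ0 : 0 < κ) :
    ∃ γ : ℝ → ℝ × ℝ, ContDiff ℝ 1 γ ∧ IsCrossing γ (deriv γ) ∧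
      ∫ t in (0 : ℝ)..1, √(g (γ t) (deriv γ t) (deriv γ t)) < Real.pi / √κ := by
  obtain ⟨γ, hγ, h⟩ := hg.exists_contDiff_isMinimizer
  refine ⟨γ, hγ, h.toIsCrossing, ?_⟩
  have hlength : ∫ t in (0 : ℝ)..1, √(g (γ t) (deriv γ t) (deriv γ t)) =
      √(energy g γ (deriv γ)) := by
    rw [intervalIntegral.integral_congr (g := fun _ ↦ √(energy g γ (deriv γ)))
      fun t ht ↦ congrArg _ (h.metric_deriv_eq_energy hg hγ (by simpa using ht))]
    simp
  rw [hlength, lt_div_iff₀ (Real.sqrt_pos.2 hκ0), ← Real.sqrt_mul (h.energy_pos hg).le,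
    Real.sqrt_lt' Real.pi_pos, mul_comm]
  exact h.mul_energy_lt_pi_sq hg hκ hγ

end Length

section Brioschi

set_option maxSynthPendingDepth 3

variable {B : ℝ × ℝ →L[ℝ] ℝ × ℝ →L[ℝ] ℝ}

theorem isInvertible_of_gramDet_ne_zero (hB : ∀ v w, B v w = B w v) (hdet : gramDet B ≠ 0) :
    B.IsInvertible := by
  refine isInvertible_of_forall_apply_eq_zero fun v hv ↦ ?_
  have h₁ : B v (1, 0) = 0 := by simp [hv]
  have h₂ : B v (0, 1) = 0 := by simp [hv]
  rw [bilin_apply_eq hB] at h₁ h₂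
  ext
  · refine (mul_eq_zero.1 ?_).resolve_left hdet
    simp only [gramDet]
    linear_combination B (0, 1) (0, 1) * h₁ - B (1, 0) (0, 1) * h₂
  · refine (mul_eq_zero.1 ?_).resolve_left hdet
    simp only [gramDet]
    linear_combination B (1, 0) (1, 0) * h₂ - B (1, 0) (0, 1) * h₁

theorem gramDet_mul_apply_inverse (hB : ∀ v w, B v w = B w v) (hinv : B.IsInvertible)
    (α β : ℝ × ℝ →L[ℝ] ℝ) :
    gramDet B * α (B.inverse β) = B (0, 1) (0, 1) * (α (1, 0) * β (1, 0)) -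
      B (1, 0) (0, 1) * (α (1, 0) * β (0, 1) + α (0, 1) * β (1, 0)) +
      B (1, 0) (1, 0) * (α (0, 1) * β (0, 1)) := by
  have hβ (v : ℝ × ℝ) : β v = B (B.inverse β) v := by rw [hinv.self_apply_inverse]
  rw [hβ (1, 0), hβ (0, 1), bilin_apply_eq hB (B.inverse β) (1, 0),
    bilin_apply_eq hB (B.inverse β) (0, 1), dual_apply_eq α (B.inverse β), gramDet]
  ring

/-- The metric `E dx² + 2F dxdy + G dy²` as a field of bilinear forms. -/
noncomputable def metricForm (E F G : ℝ × ℝ → ℝ) (p : ℝ × ℝ) : ℝ × ℝ →L[ℝ] ℝ × ℝ →L[ℝ] ℝ :=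
  E p • (ContinuousLinearMap.fst ℝ ℝ ℝ).smulRight (.fst ℝ ℝ ℝ) +
    F p • ((ContinuousLinearMap.fst ℝ ℝ ℝ).smulRight (.snd ℝ ℝ ℝ) +
      (ContinuousLinearMap.snd ℝ ℝ ℝ).smulRight (.fst ℝ ℝ ℝ)) +
    G p • (ContinuousLinearMap.snd ℝ ℝ ℝ).smulRight (.snd ℝ ℝ ℝ)

variable {E F G : ℝ × ℝ → ℝ}

theorem metricForm_apply (p v w : ℝ × ℝ) : metricForm E F G p v w =
    E p * (v.1 * w.1) + F p * (v.1 * w.2 + v.2 * w.1) + G p * (v.2 * w.2) := by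
  simp [metricForm, mul_add]

theorem metricForm_symm (p v w : ℝ × ℝ) : metricForm E F G p v w = metricForm E F G p w v := by
  simp only [metricForm_apply]
  ring

theorem gramDet_metricForm (p : ℝ × ℝ) : gramDet (metricForm E F G p) = E p * G p - F p ^ 2 := by
  simp [gramDet, metricForm_apply]

theorem contDiff_metricForm {n : WithTop ℕ∞} (hE : ContDiff ℝ n E) (hF : ContDiff ℝ n F)
    (hG : ContDiff ℝ n G) : ContDiff ℝ n (metricForm E F G) :=
  ((hE.smul contDiff_const).add (hF.smul contDiff_const)).add (hG.smul contDiff_const)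

theorem fderiv_metricForm (hE : Differentiable ℝ E) (hF : Differentiable ℝ F)
    (hG : Differentiable ℝ G) (p e : ℝ × ℝ) :
    fderiv ℝ (metricForm E F G) p e =
      metricForm (fderiv ℝ E · e) (fderiv ℝ F · e) (fderiv ℝ G · e) p := by
  let Φ (A : ℝ × ℝ →L[ℝ] ℝ × ℝ →L[ℝ] ℝ) {f : ℝ × ℝ → ℝ} (hf : Differentiable ℝ f) :
      HasFDerivAt (fun q ↦ f q • A) ((fderiv ℝ f p).smulRight A) p :=
    (hf p).hasFDerivAt.smul_const A
  exact congrArg (· e) (HasFDerivAt.fderiv (f := metricForm E F G)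
    (((Φ _ hE).add (Φ _ hF)).add (Φ _ hG)))

theorem fderiv_fderiv_eq {V W : Type*} [NormedAddCommGroup V] [NormedSpace ℝ V]
    [NormedAddCommGroup W] [NormedSpace ℝ W] {f : V → W} (hf : ContDiff ℝ 2 f) (p v w : V) :
    fderiv ℝ (fderiv ℝ f) p v w = fderiv ℝ (fderiv ℝ f · w) p v := by
  have hdf := (hf.fderiv_right (m := 1) le_rfl).differentiable one_ne_zero p
  rw [(hdf.hasFDerivAt.clm_apply (hasFDerivAt_const w p)).fderiv]
  simp

theorem fderiv_fderiv_metricForm (hE : ContDiff ℝ 2 E) (hF : ContDiff ℝ 2 F)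
    (hG : ContDiff ℝ 2 G) (p v w : ℝ × ℝ) :
    fderiv ℝ (fderiv ℝ (metricForm E F G)) p v w = metricForm (fderiv ℝ (fderiv ℝ E) · v w)
      (fderiv ℝ (fderiv ℝ F) · v w) (fderiv ℝ (fderiv ℝ G) · v w) p := by
  have hdiff {f : ℝ × ℝ → ℝ} (hf : ContDiff ℝ 2 f) : Differentiable ℝ (fderiv ℝ f · w) :=
    (((hf.fderiv_right (m := 1) le_rfl).clm_apply contDiff_const).differentiable one_ne_zero)
  have hfirst : (fderiv ℝ (metricForm E F G) · w) =
      metricForm (fderiv ℝ E · w) (fderiv ℝ F · w) (fderiv ℝ G · w) := funext fun q ↦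
    fderiv_metricForm (hE.differentiable two_ne_zero) (hF.differentiable two_ne_zero)
      (hG.differentiable two_ne_zero) q w
  rw [fderiv_fderiv_eq (contDiff_metricForm hE hF hG), hfirst,
    fderiv_metricForm (hdiff hE) (hdiff hF) (hdiff hG)]
  simp only [metricForm, fderiv_fderiv_eq hE, fderiv_fderiv_eq hF, fderiv_fderiv_eq hG]

theorem fderiv_fderiv_apply {f : ℝ × ℝ → ℝ} (hf : ContDiff ℝ 2 f) (p v w : ℝ × ℝ) :
    fderiv ℝ (fderiv ℝ f) p v w = pdx (pdx f) p * (v.1 * w.1) +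
      pdx (pdy f) p * (v.1 * w.2 + v.2 * w.1) + pdy (pdy f) p * (v.2 * w.2) := by
  rw [bilin_apply_eq (hf.contDiffAt.isSymmSndFDerivAt (by simp)), fderiv_fderiv_eq hf,
    fderiv_fderiv_eq hf, fderiv_fderiv_eq hf]
  rfl

theorem christoffelLower_metricForm (hE : Differentiable ℝ E) (hF : Differentiable ℝ F)
    (hG : Differentiable ℝ G) (p v w : ℝ × ℝ) :
    christoffelLower (metricForm E F G) p v w (1, 0) =
        pdx E p * (v.1 * w.1) / 2 + pdy E p * (v.1 * w.2 + v.2 * w.1) / 2 +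
          (pdy F p - pdx G p / 2) * (v.2 * w.2) ∧
      christoffelLower (metricForm E F G) p v w (0, 1) =
        (pdx F p - pdy E p / 2) * (v.1 * w.1) + pdx G p * (v.1 * w.2 + v.2 * w.1) / 2 +
          pdy G p * (v.2 * w.2) / 2 := by
  constructor <;>
    simp only [christoffelLower_apply, fderiv_metricForm hE hF hG, metricForm_apply,
      dual_apply_eq (fderiv ℝ _ p) v, dual_apply_eq (fderiv ℝ _ p) w, pdx, pdy] <;>
    ring

theorem curvatureForm_metricForm (hE : ContDiff ℝ 2 E) (hF : ContDiff ℝ 2 F)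
    (hG : ContDiff ℝ 2 G) {p : ℝ × ℝ} (hdet : E p * G p - F p ^ 2 ≠ 0) (v w : ℝ × ℝ) :
    curvatureForm (metricForm E F G) p v w = gaussCurvature E F G p *
      (metricForm E F G p v v * metricForm E F G p w w - metricForm E F G p v w ^ 2) := by
  have hsymm := metricForm_symm (E := E) (F := F) (G := G) p
  rw [← gramDet_metricForm] at hdet
  have hinv := isInvertible_of_gramDet_ne_zero hsymm hdet
  have hlower (v w : ℝ × ℝ) := christoffelLower_metricForm (hE.differentiable two_ne_zero)
    (hF.differentiable two_ne_zero) (hG.differentiable two_ne_zero) p v w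
  have hdual (v w v' w' : ℝ × ℝ) := gramDet_mul_apply_inverse hsymm hinv
    (christoffelLower (metricForm E F G) p v w) (christoffelLower (metricForm E F G) p v' w')
  have hmixed := hdual v w v w
  have hpure := hdual v v w w
  rw [apply_self_mul_apply_self_sub_sq hsymm, gaussCurvature, ← gramDet_metricForm,
    div_mul_eq_mul_div, eq_div_iff (pow_ne_zero 2 hdet), curvatureForm, apply_christoffel hinv,
    apply_christoffel hinv]
  simp only [fderiv_fderiv_metricForm hE hF hG, fderiv_fderiv_apply hE, fderiv_fderiv_apply hF,
    fderiv_fderiv_apply hG, christoffel, (hlower _ _).1, (hlower _ _).2, gramDet_metricForm,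
    metricForm_apply, Matrix.det_fin_three, Matrix.of_apply, Matrix.cons_val', Matrix.cons_val_zero,
    Matrix.cons_val_fin_one, Matrix.cons_val_one, Matrix.cons_val] at hmixed hpure ⊢
  linear_combination (E p * G p - F p ^ 2) * (hmixed - hpure)

theorem isBandMetric_metricForm (hE : ContDiff ℝ 2 E) (hF : ContDiff ℝ 2 F)
    (hG : ContDiff ℝ 2 G) (hEper : ∀ p : ℝ × ℝ, E (p.1 + 1, p.2) = E p)
    (hFper : ∀ p : ℝ × ℝ, F (p.1 + 1, p.2) = F p) (hGper : ∀ p : ℝ × ℝ, G (p.1 + 1, p.2) = G p)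
    (hpos : ∀ p ∈ strip, 0 < E p ∧ 0 < E p * G p - F p ^ 2) :
    IsBandMetric (metricForm E F G) where
  contDiff := contDiff_metricForm hE hF hG
  symm := metricForm_symm
  periodic p := by
    have hp : p + (1, 0) = (p.1 + 1, p.2) := by ext <;> simp
    rw [hp, metricForm, hEper, hFper, hGper, metricForm]
  pos p hp v hv := by
    obtain ⟨hE0, hdet⟩ := hpos p hp
    refine pos_of_mul_pos_right (a := E p) ?_ hE0.le
    have hsq : E p * metricForm E F G p v v =
        (E p * v.1 + F p * v.2) ^ 2 + (E p * G p - F p ^ 2) * v.2 ^ 2 := by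
      rw [metricForm_apply]
      ring
    rw [hsq]
    rcases eq_or_ne v.2 0 with h₂ | h₂
    · have h₁ : v.1 ≠ 0 := fun h₁ ↦ hv (Prod.ext h₁ h₂)
      simp only [h₂, mul_zero, add_zero, zero_pow two_ne_zero]
      positivity
    · positivity

theorem pathLength_eq_integral_metricForm (γ : ℝ → ℝ × ℝ) : pathLength E F G γ =
    ∫ t in (0 : ℝ)..1, √(metricForm E F G (γ t) (deriv γ t) (deriv γ t)) := by
  refine intervalIntegral.integral_congr fun t _ ↦ ?_
  simp only [metricForm_apply]
  ring_nf

end Brioschi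

end BandWidth

open BandWidth in
theorem torical_band_width_inequality_dim_one_general
    {E F G : ℝ × ℝ → ℝ} {κ : ℝ} (hκ : 0 < κ)
    (hE : ContDiff ℝ 2 E) (hF : ContDiff ℝ 2 F) (hG : ContDiff ℝ 2 G)
    (hEper : ∀ p : ℝ × ℝ, E (p.1 + 1, p.2) = E p)
    (hFper : ∀ p : ℝ × ℝ, F (p.1 + 1, p.2) = F p)
    (hGper : ∀ p : ℝ × ℝ, G (p.1 + 1, p.2) = G p)
    (hpos : ∀ p : ℝ × ℝ, p.2 ∈ Icc (-1 : ℝ) 1 → 0 < E p ∧ 0 < E p * G p - F p ^ 2)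
    (hK : ∀ p : ℝ × ℝ, p.2 ∈ Icc (-1 : ℝ) 1 → κ ≤ gaussCurvature E F G p) :
    ∃ γ : ℝ → ℝ × ℝ, ContDiff ℝ 1 γ ∧ (γ 0).2 = -1 ∧ (γ 1).2 = 1 ∧
      (∀ t ∈ Icc (0 : ℝ) 1, (γ t).2 ∈ Icc (-1 : ℝ) 1) ∧
      pathLength E F G γ < Real.pi / √κ := by
  have hg := isBandMetric_metricForm hE hF hG hEper hFper hGper hpos
  have hcurv : ∀ p ∈ strip, ∀ v w,
      κ * (metricForm E F G p v v * metricForm E F G p w w - metricForm E F G p v w ^ 2) ≤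
        curvatureForm (metricForm E F G) p v w := fun p hp v w ↦ by
    rw [curvatureForm_metricForm hE hF hG (hpos p hp).2.ne',
      apply_self_mul_apply_self_sub_sq (hg.symm p)]
    exact mul_le_mul_of_nonneg_right (hK p hp)
      (mul_nonneg (hg.gramDet_pos hp).le (sq_nonneg _))
  obtain ⟨γ, hγ, hcross, hlength⟩ := hg.exists_length_lt hcurv hκ
  exact ⟨γ, hγ, hcross.snd_zero, hcross.snd_one, hcross.mem_strip,
    (pathLength_eq_integral_metricForm γ).trans_lt hlength⟩

/-- (torical band width inequality for `n = 1`) let `g` be a Riemannian metric on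
the cylinder `S¹ × [−1,1]` — encoded as a smooth metric `E dx² + 2F dxdy + G dy²` on the strip
`ℝ × [−1,1]`, `1`-periodic in the first variable — with scalar curvature `Sc(g) ≥ 2`
everywhere, i.e. Gauss curvature `K ≥ 1` on the strip.  Then the distance between the two
boundary circles is `< π`: there is a `C¹` path in the strip from `{y = −1}` to `{y = 1}`
of `g`-length `< π`. -/
theorem torical_band_width_inequality_dim_one
    (E F G : ℝ × ℝ → ℝ)
    (hE : ContDiff ℝ (⊤ : ℕ∞) E) (hF : ContDiff ℝ (⊤ : ℕ∞) F) (hG : ContDiff ℝ (⊤ : ℕ∞) G)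
    (hEper : ∀ p : ℝ × ℝ, E (p.1 + 1, p.2) = E p)
    (hFper : ∀ p : ℝ × ℝ, F (p.1 + 1, p.2) = F p)
    (hGper : ∀ p : ℝ × ℝ, G (p.1 + 1, p.2) = G p)
    (hpos : ∀ p : ℝ × ℝ, 0 < E p ∧ 0 < E p * G p - F p ^ 2)
    (hK : ∀ p : ℝ × ℝ, p.2 ∈ Set.Icc (-1 : ℝ) 1 → 1 ≤ gaussCurvature E F G p) :
    ∃ γ : ℝ → ℝ × ℝ, ContDiff ℝ 1 γ ∧ (γ 0).2 = -1 ∧ (γ 1).2 = 1 ∧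
      (∀ t ∈ Set.Icc (0:ℝ) 1, (γ t).2 ∈ Set.Icc (-1:ℝ) 1) ∧
      pathLength E F G γ < Real.pi := by
  simpa using torical_band_width_inequality_dim_one_general one_pos (contDiff_infty.1 hE 2)
    (contDiff_infty.1 hF 2) (contDiff_infty.1 hG 2) hEper hFper hGper (fun p _ ↦ hpos p) hK
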